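/- Let $G$ be a finite graph (multiple edges allowed) in which each vertex has valence at most $4$, which has no loops, and which has at least one edge unless it is empty. Let $G$ be smoothly embedded in the 2-sphere $S^2$, in the following sense: the vertices are distinct points; each edge is a smooth arc, parametrised by $[0,1]$ with nowhere vanishing velocity (endpoints included), which joins its two end vertices; the interiors of the edges are embedded, disjoint from each other and disjoint from the vertices; the edges at a vertex leave it in pairwise distinct tangent directions; and at each vertex of valence $4$ the four tangent directions do not all lie in a closed half-plane of the tangent plane, and either form two pairs of opposite directions (as at a crossing of a link projection) or contain no two opposite directions. A Morse function $f\colon S^2\to\mathbb{R}$ (a smooth function with only nondegenerate critical points) is generic with respect to $G$ if its critical points have distinct values and the vertices of $G$ have distinct values (a critical point and a vertex may share a value, and vertices may be critical points). The width of $G$ with respect to $f$ is $\max\{|f^{-1}(t)\cap G| : t\in\mathbb{R}\}$, and the Morse width of $G$ is the minimum of this width over all Morse functions $f$ that are generic with respect to $G$. For a set $A$ of vertices, let $\partial A$ be the set of edges with one endpoint in $A$ and one endpoint not in $A$. For a bijection $\varphi$ from $\{1,\dots,v(G)\}$ to the vertex set $V(G)$, where $v(G)=|V(G)|$, the width of $\varphi$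 is $\max_i|\partial(\varphi(\{1,\dots,i\}))|$, and the width of $G$ as an abstract graph is the minimum of the widths of all such $\varphi$. Then the Morse width of $G$ is equal to its width as an abstract graph. -/

import Mathlib

open scoped ContDiff Manifold

/-! ### Finite graphs and their width -/

/-- A graph with vertex type `V` and edge type `E`: every edge has an unordered pair of
endpoints. Multiple edges and loops are allowed. -/
structure Multigraph (V E : Type*) where
  /-- the two (possibly equal) endpoints of each edge -/
  ends : E → Sym2 V

namespace Multigraph

variable {V E : Type*} (G : Multigraph V E)

/-- `∂A`: the set of edges with one endpoint in `A` and one endpoint not in `A`. -/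
def edgeBoundary (A : Set V) : Set E :=
  {e | ∃ u v : V, G.ends e = s(u, v) ∧ u ∈ A ∧ v ∉ A}

/-- The valence of a vertex: the number of edge-ends at `v`, so that loops count twice. -/
noncomputable def degree (v : V) : ℕ :=
  {e | v ∈ G.ends e}.ncard + {e | G.ends e = s(v, v)}.ncard

/-- No edge joins a vertex to itself. -/
def Loopless : Prop := ∀ e, ¬ (G.ends e).IsDiag

/-- The width of a total ordering `φ` of the vertices: the maximum over `i` of
`|∂(φ({first, …, i-th}))|`. -/
noncomputable def orderingWidth [Fintype V] (φ : Fin (Fintype.card V) ≃ V) : ℕ :=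
  Finset.univ.sup fun i : Fin (Fintype.card V) => (G.edgeBoundary (φ '' Set.Iic i)).ncard

/-- The width of an abstract graph: the minimum of the widths of all total orderings of its
vertices. (The set of these widths is never empty.) -/
noncomputable def width [Fintype V] : ℕ :=
  sInf (Set.range fun φ : Fin (Fintype.card V) ≃ V => G.orderingWidth φ)

end Multigraph

/-! ### Morse functions on the 2-sphere -/

/-- Euclidean 3-space. -/
abbrev E3 : Type := EuclideanSpace ℝ (Fin 3)

/-- The unit sphere in Euclidean 3-space. -/
abbrev S2 : Type := Metric.sphere (0 : E3) 1

instance finrankE3Fact : Fact (Module.finrank ℝ E3 = 2 + 1) := ⟨by simp⟩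

/-- The set of critical points of a function on the 2-sphere. -/
def criticalSet (f : S2 → ℝ) : Set S2 := {p | mfderiv (𝓡 2) 𝓘(ℝ, ℝ) f p = 0}

/-- The second derivative at `p` of the local expression of `f` in the preferred chart at `p`.
At a critical point, this is the Hessian, and whether it is nondegenerate does not depend on
the chart. -/
noncomputable def chartHessian (f : S2 → ℝ) (p : S2) :
    EuclideanSpace ℝ (Fin 2) →L[ℝ] EuclideanSpace ℝ (Fin 2) →L[ℝ] ℝ :=
  fderiv ℝ (fderiv ℝ (f ∘ (extChartAt (𝓡 2) p).symm)) (extChartAt (𝓡 2) p p)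

/-- A Morse function on the 2-sphere: a smooth function all of whose critical points are
nondegenerate. -/
structure IsMorse (f : S2 → ℝ) : Prop where
  smooth : ContMDiff (𝓡 2) 𝓘(ℝ, ℝ) ∞ f
  nondegenerate : ∀ p ∈ criticalSet f, ∀ x, x ≠ 0 → ∃ y, chartHessian f p x y ≠ 0

/-! ### Graphs embedded in the 2-sphere -/

/-- The velocity vector at time `t` of a path on the sphere parametrised by `[0, 1]`
(one-sided at the two ends), as a vector of the ambient space. -/
noncomputable def pathVelocity (γ : ℝ → S2) (t : ℝ) : E3 :=
  derivWithin (fun s => (γ s : E3)) (Set.Icc 0 1) t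

/-- The first point (`false`) or the last point (`true`) of a path parametrised by `[0, 1]`. -/
def pathEnd (γ : ℝ → S2) : Bool → S2
  | false => γ 0
  | true => γ 1

/-- The tangent vector with which a path parametrised by `[0, 1]` leaves its first point
(`false`) or, traversed backwards, leaves its last point (`true`). -/
noncomputable def pathEndDir (γ : ℝ → S2) : Bool → E3
  | false => pathVelocity γ 0
  | true => -pathVelocity γ 1

/-- The tangent vectors at `p` of the edge-ends at `p`, for a family of paths parametrised by
`[0, 1]`. -/
def endDirs {E : Type*} (arc : E → ℝ → S2) (p : S2) : Set E3 :=
  {d | ∃ e b, pathEnd (arc e) b = p ∧ pathEndDir (arc e) b = d}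

/-- A smooth embedding of a graph in the 2-sphere. Vertices go to distinct points, and edges go
to smooth regular arcs, which are embedded, meet the vertices only at their own ends and are
otherwise disjoint from each other. Different edge-ends at a vertex leave it in different
directions. The four directions at a vertex of valence 4 do not lie in a closed half-plane of
the tangent plane, and either they form two pairs of opposite directions, as at a crossing of a
link projection, or no two of them are opposite. Only the values of `arc e` on `[0, 1]`
matter. -/
structure SmoothEmbedding {V E : Type*} (G : Multigraph V E) where
  /-- the position of each vertex -/
  vert : V → S2
  /-- a parametrisation of each edge by `[0, 1]` -/
  arc : E → ℝ → S2
  vert_injective : Function.Injective vert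
  arc_ends : ∀ e, ∃ u v, G.ends e = s(u, v) ∧ arc e 0 = vert u ∧ arc e 1 = vert v
  arc_smooth : ∀ e, ContDiffOn ℝ ∞ (fun t => (arc e t : E3)) (Set.Icc 0 1)
  arc_regular : ∀ e, ∀ t ∈ Set.Icc (0 : ℝ) 1, pathVelocity (arc e) t ≠ 0
  arc_injOn : ∀ e, Set.InjOn (arc e) (Set.Ioo 0 1)
  arc_ne_vert : ∀ e, ∀ t ∈ Set.Ioo (0 : ℝ) 1, ∀ v, arc e t ≠ vert v
  arc_ne_arc : ∀ e e', e ≠ e' →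
    ∀ t ∈ Set.Ioo (0 : ℝ) 1, ∀ t' ∈ Set.Ioo (0 : ℝ) 1, arc e t ≠ arc e' t'
  dir_distinct : ∀ e b e' b', (e, b) ≠ (e', b') →
    pathEnd (arc e) b = pathEnd (arc e') b' →
    ¬ SameRay ℝ (pathEndDir (arc e) b) (pathEndDir (arc e') b')
  dir_balanced : ∀ v, G.degree v = 4 → ∀ w : E3, inner ℝ (vert v : E3) w = 0 → w ≠ 0 →
    ∃ d ∈ endDirs arc (vert v), inner ℝ w d < 0
  dir_opposite : ∀ v, G.degree v = 4 →
    (∃ d ∈ endDirs arc (vert v), ∃ d' ∈ endDirs arc (vert v), SameRay ℝ d' (-d)) →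
    ∀ d ∈ endDirs arc (vert v), ∃ d' ∈ endDirs arc (vert v), SameRay ℝ d' (-d)

namespace SmoothEmbedding

variable {V E : Type*} {G : Multigraph V E} (Γ : SmoothEmbedding G)

/-- The embedded graph as a subset of the 2-sphere. -/
def carrier : Set S2 := Set.range Γ.vert ∪ ⋃ e, Γ.arc e '' Set.Icc 0 1

/-- A Morse function is generic with respect to the embedded graph if its critical points have
distinct values and the vertices have distinct values. A critical point and a vertex may have
the same value, and may coincide. -/
structure IsGeneric (f : S2 → ℝ) : Prop where
  morse : IsMorse f
  critical_injOn : Set.InjOn f (criticalSet f)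
  vert_injective : Function.Injective fun v => f (Γ.vert v)

/-- The width of the embedded graph with respect to `f`: the maximum over `t` of the number of
points of the graph in `f⁻¹(t)`, with value `⊤` if these numbers are infinite or unbounded. -/
noncomputable def widthWith (f : S2 → ℝ) : ℕ∞ :=
  ⨆ t : ℝ, (f ⁻¹' {t} ∩ Γ.carrier).encard

/-- The Morse width of the embedded graph: the minimum of its width with respect to `f` over
all generic Morse functions `f`. -/
noncomputable def morseWidth : ℕ∞ :=
  ⨅ (f : S2 → ℝ) (_ : Γ.IsGeneric f), Γ.widthWith f

end SmoothEmbedding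

/-!
For the lower bound, order the vertices by the values of a generic Morse function `f`. A level just
above the `i`-th vertex separates the first `i` vertices from the others, so by the intermediate
value theorem it meets every edge of the boundary of the set of the first `i` vertices.

For the upper bound, a vertex ordering of minimal width is realized by a generic Morse function
which is monotone on every edge. Then a level `t` meets every edge at most once, and only if the
edge joins a vertex of height at most `t` to one of height at least `t`. Such a function is built
from the vertices outwards. Near a vertex it is a quadratic function whose derivatives along the at
most four edge-ends have the prescribed signs; the conditions on four tangent directions are what
makes this possible. The quadratic functions are spliced to monotone functions on the edges, and
the result is extended to the ambient space by a partition of unity. A perturbation by a small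
linear function, cut off near the vertices, makes all critical points nondegenerate, because almost
every linear perturbation does so by Sard's theorem. Another small perturbation, which is constant
near every critical point, separates the critical values.
-/

open Set Filter Topology

/-! ### Restrictions of ambient functions to the sphere -/

theorem fderiv_fderiv_comp {X Y Z : Type*} [NormedAddCommGroup X] [NormedSpace ℝ X]
    [NormedAddCommGroup Y] [NormedSpace ℝ Y] [NormedAddCommGroup Z] [NormedSpace ℝ Z]
    {F : Y → Z} {ψ : X → Y} (hF : Differentiable ℝ F)
    (hψ : Differentiable ℝ ψ) {z : X} (hF2 : DifferentiableAt ℝ (fderiv ℝ F) (ψ z))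
    (hψ2 : DifferentiableAt ℝ (fderiv ℝ ψ) z) (u v : X) :
    fderiv ℝ (fderiv ℝ (F ∘ ψ)) z u v =
      fderiv ℝ (fderiv ℝ F) (ψ z) (fderiv ℝ ψ z u) (fderiv ℝ ψ z v)
        + fderiv ℝ F (ψ z) (fderiv ℝ (fderiv ℝ ψ) z u v) := by
  have hcomp : fderiv ℝ (F ∘ ψ) = fun y => (fderiv ℝ F (ψ y)).comp (fderiv ℝ ψ y) :=
    funext fun y => fderiv_comp y (hF _) (hψ y)
  have hderiv := HasFDerivAt.clm_comp (c := fun y => fderiv ℝ F (ψ y))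
    (HasFDerivAt.comp z hF2.hasFDerivAt (hψ z).hasFDerivAt) hψ2.hasFDerivAt
  rw [hcomp, hderiv.fderiv, add_comm]
  rfl

section SphereCritical

variable {X Y : Type*} [NormedAddCommGroup X] [InnerProductSpace ℝ X]
  [NormedAddCommGroup Y] [NormedSpace ℝ Y]

/-- The unit vector `x` is a critical point of the restriction of `F` to the unit sphere. -/
def IsSphereCritical (F : X → ℝ) (x : X) : Prop :=
  ∀ v, inner ℝ x v = 0 → fderiv ℝ F x v = 0

/-- The Hessian at a critical point `x` of the restriction of `F` to the unit sphere is
nondegenerate. The second term of this Hessian is the contribution of the curvature of the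
sphere. -/
def IsSphereNondegenerate (F : X → ℝ) (x : X) : Prop :=
  ∀ u, inner ℝ x u = 0 → u ≠ 0 → ∃ v, inner ℝ x v = 0 ∧
    fderiv ℝ (fderiv ℝ F) x u v - fderiv ℝ F x x * inner ℝ u v ≠ 0

/-- All critical points of the restriction of `F` to the unit sphere are nondegenerate. -/
def IsSphereMorse (F : X → ℝ) : Prop :=
  ∀ x, ‖x‖ = 1 → IsSphereCritical F x → IsSphereNondegenerate F x

theorem inner_self_sub_inner_smul {x : X} (hx : ‖x‖ = 1) (w : X) :
    inner ℝ x (w - inner ℝ x w • x) = 0 := by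
  rw [inner_sub_right, inner_smul_right, real_inner_self_eq_norm_sq, hx]
  ring

theorem IsSphereCritical.fderiv_apply {F : X → ℝ} {x : X} (h : IsSphereCritical F x)
    (hx : ‖x‖ = 1) (w : X) : fderiv ℝ F x w = fderiv ℝ F x x * inner ℝ x w := by
  have := h _ (inner_self_sub_inner_smul hx w)
  rw [map_sub, map_smul, smul_eq_mul] at this
  linarith

theorem inner_fderiv_eq_zero_of_norm_eq_one {ψ : Y → X} (hψ : ∀ y, ‖ψ y‖ = 1)
    {y : Y} (hd : DifferentiableAt ℝ ψ y) (v : Y) : inner ℝ (ψ y) (fderiv ℝ ψ y v) = 0 := by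
  have h : (fun t => inner ℝ (ψ t) (ψ t)) = fun _ => (1 : ℝ) := by
    simp [hψ]
  have hv := congrArg (fun T : Y →L[ℝ] ℝ => T v) (hd.hasFDerivAt.inner ℝ hd.hasFDerivAt).fderiv
  rw [h] at hv
  simp only [fderiv_fun_const, Pi.zero_apply, zero_apply, ContinuousLinearMap.comp_apply,
    ContinuousLinearMap.prod_apply, fderivInnerCLM_apply, real_inner_comm] at hv
  linarith

theorem inner_fderiv_fderiv_of_norm_eq_one {ψ : Y → X} (hψ : ∀ y, ‖ψ y‖ = 1)
    (hd : Differentiable ℝ ψ) {z : Y} (hd2 : DifferentiableAt ℝ (fderiv ℝ ψ) z) (u v : Y) :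
    inner ℝ (ψ z) (fderiv ℝ (fderiv ℝ ψ) z u v) =
      -inner ℝ (fderiv ℝ ψ z u) (fderiv ℝ ψ z v) := by
  have h : (fun y => inner ℝ (ψ y) (fderiv ℝ ψ y v)) = fun _ => (0 : ℝ) :=
    funext fun y => inner_fderiv_eq_zero_of_norm_eq_one hψ (hd y) v
  have hu := congrArg (fun T : Y →L[ℝ] ℝ => T u)
    ((hd z).hasFDerivAt.inner ℝ (hd2.hasFDerivAt.clm_apply (hasFDerivAt_const v z))).fderiv
  rw [h] at hu
  simp only [fderiv_fun_const, Pi.zero_apply, zero_apply, ContinuousLinearMap.comp_zero, zero_add,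
    ContinuousLinearMap.comp_apply, ContinuousLinearMap.prod_apply,
    ContinuousLinearMap.flip_apply, fderivInnerCLM_apply] at hu
  linarith

end SphereCritical

/-- The Euclidean plane, on which the charts of the sphere are modelled. -/
abbrev E2 : Type := EuclideanSpace ℝ (Fin 2)

/-- The inverse of the preferred chart at `p`, as a map into the ambient space. -/
noncomputable def sphereParam (p : S2) (z : E2) : E3 := ((extChartAt (𝓡 2) p).symm z : S2)

/-- The differential at the centre of the inverse of the preferred chart at `p`. -/
noncomputable def sphereParamDeriv (p : S2) : E2 →L[ℝ] E3 :=
  fderiv ℝ (sphereParam p) (extChartAt (𝓡 2) p p)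

theorem contDiff_sphereParam (p : S2) : ContDiff ℝ ∞ (sphereParam p) := by
  let U : _ ≃ₗᵢ[ℝ] _ :=
    (OrthonormalBasis.fromOrthogonalSpanSingleton (𝕜 := ℝ) 2
      (ne_zero_of_mem_unit_sphere (-p))).repr
  exact (contDiff_stereoInvFunAux.comp (ℝ ∙ (-p : E3))ᗮ.subtypeL.contDiff).comp U.symm.contDiff

theorem norm_sphereParam (p : S2) (z : E2) : ‖sphereParam p z‖ = 1 :=
  norm_eq_of_mem_sphere _

theorem sphereParam_center (p : S2) : sphereParam p (extChartAt (𝓡 2) p p) = p := by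
  simp [sphereParam]

theorem mvfderiv_coe_eq_sphereParamDeriv (p : S2) :
    mvfderiv (𝓡 2) ((↑) : S2 → E3) p = sphereParamDeriv p := by
  rw [((contMDiff_coe_sphere p).mdifferentiableAt one_ne_zero).mvfderiv]
  simp only [mfld_simps, fderivWithin_univ]
  rfl

theorem exists_sphereParamDeriv_eq_iff (p : S2) (v : E3) :
    (∃ u, sphereParamDeriv p u = v) ↔ inner ℝ (p : E3) v = 0 := by
  rw [← mvfderiv_coe_eq_sphereParamDeriv, ← Submodule.mem_orthogonal_singleton_iff_inner_right,
    ← range_mvfderiv_subtypeVal (n := 2) p]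
  rfl

theorem inner_sphereParamDeriv (p : S2) (u : E2) : inner ℝ (p : E3) (sphereParamDeriv p u) = 0 :=
  (exists_sphereParamDeriv_eq_iff p _).1 ⟨u, rfl⟩

theorem sphereParamDeriv_injective (p : S2) : Function.Injective (sphereParamDeriv p) := by
  rw [← mvfderiv_coe_eq_sphereParamDeriv]
  exact injective_mvfderiv_subtypeVal_sphere (n := 2) p

theorem contMDiff_restrict_sphere {F : E3 → ℝ} (hF : ContDiff ℝ ∞ F) :
    ContMDiff (𝓡 2) 𝓘(ℝ, ℝ) ∞ (fun x : S2 => F x) :=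
  hF.contMDiff.comp contMDiff_coe_sphere

theorem mfderiv_restrict_sphere {F : E3 → ℝ} (hF : ContDiff ℝ ∞ F) (p : S2) :
    mfderiv (𝓡 2) 𝓘(ℝ, ℝ) (fun x : S2 => F x) p = (fderiv ℝ F p).comp (sphereParamDeriv p) := by
  have hm : MDifferentiableAt (𝓡 2) 𝓘(ℝ, ℝ) (fun x : S2 => F x) p :=
    (contMDiff_restrict_sphere hF p).mdifferentiableAt (by simp)
  have hd : HasFDerivAt (F ∘ sphereParam p) ((fderiv ℝ F p).comp (sphereParamDeriv p))
      (extChartAt (𝓡 2) p p) := by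
    refine HasFDerivAt.comp _ ?_ ((contDiff_sphereParam p).differentiable (by simp) _).hasFDerivAt
    rw [sphereParam_center]
    exact (hF.differentiable (by simp) _).hasFDerivAt
  rw [hm.mfderiv, ← hd.fderiv]
  simp only [mfld_simps, fderivWithin_univ]
  rfl

theorem mem_criticalSet_restrict_iff {F : E3 → ℝ} (hF : ContDiff ℝ ∞ F) (p : S2) :
    p ∈ criticalSet (fun x : S2 => F x) ↔ IsSphereCritical F p := by
  rw [criticalSet, mem_ofPred_eq, mfderiv_restrict_sphere hF]
  constructor
  · intro h v hv
    obtain ⟨u, rfl⟩ := (exists_sphereParamDeriv_eq_iff p v).2 hv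
    exact congrArg (fun T : E2 →L[ℝ] ℝ => T u) h
  · intro h
    ext u
    exact h _ (inner_sphereParamDeriv p u)

theorem chartHessian_restrict {F : E3 → ℝ} (hF : ContDiff ℝ ∞ F) {p : S2}
    (hp : IsSphereCritical F p) (u v : E2) :
    chartHessian (fun x : S2 => F x) p u v =
      fderiv ℝ (fderiv ℝ F) p (sphereParamDeriv p u) (sphereParamDeriv p v)
        - fderiv ℝ F p p * inner ℝ (sphereParamDeriv p u) (sphereParamDeriv p v) := by
  have hψ := contDiff_sphereParam p
  have hψd : Differentiable ℝ (sphereParam p) := hψ.differentiable (by simp)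
  have hψ2 : Differentiable ℝ (fderiv ℝ (sphereParam p)) :=
    (hψ.fderiv_right (m := 1) (by norm_cast)).differentiable (by simp)
  have hF2 : Differentiable ℝ (fderiv ℝ F) :=
    (hF.fderiv_right (m := 1) (by norm_cast)).differentiable (by simp)
  have hchain := fderiv_fderiv_comp (hF.differentiable (by simp)) hψd (hF2 _)
    (hψ2 (extChartAt (𝓡 2) p p)) u v
  have hcurv := inner_fderiv_fderiv_of_norm_eq_one (norm_sphereParam p) hψd
    (hψ2 (extChartAt (𝓡 2) p p)) u v
  rw [sphereParam_center] at hchain hcurv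
  calc chartHessian (fun x : S2 => F x) p u v = _ := hchain
    _ = _ := by
      rw [hp.fderiv_apply (norm_eq_of_mem_sphere p) (fderiv ℝ (fderiv ℝ _) _ u v), hcurv,
        sphereParamDeriv]
      ring

theorem isMorse_restrict {F : E3 → ℝ} (hF : ContDiff ℝ ∞ F)
    (h : IsSphereMorse F) : IsMorse (fun x : S2 => F x) where
  smooth := contMDiff_restrict_sphere hF
  nondegenerate p hp u hu := by
    rw [mem_criticalSet_restrict_iff hF] at hp
    obtain ⟨w, hw, hne⟩ := h p (norm_eq_of_mem_sphere p) hp (sphereParamDeriv p u)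
      (inner_sphereParamDeriv p u) ((map_ne_zero_iff _ (sphereParamDeriv_injective p)).2 hu)
    obtain ⟨v, rfl⟩ := (exists_sphereParamDeriv_eq_iff p w).2 hw
    exact ⟨v, by rwa [chartHessian_restrict hF hp]⟩

/-! ### Isolation and stability of critical points -/

section Stability

variable {X : Type*} [NormedAddCommGroup X] [InnerProductSpace ℝ X] {F F' : X → ℝ} {x : X}

/-- The critical points, on the unit sphere, of the restriction of `F` to the unit sphere. -/
def sphereCriticalSet (F : X → ℝ) : Set X := {x | ‖x‖ = 1 ∧ IsSphereCritical F x}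

/-- The restriction of a covector at `x` to the tangent space of the unit sphere, extended by `0`
on the normal line. -/
noncomputable def tangentialPart (α : X →L[ℝ] ℝ) (x : X) : X →L[ℝ] ℝ := α - α x • innerSL ℝ x

theorem continuous_tangentialPart :
    Continuous fun z : (X →L[ℝ] ℝ) × X => tangentialPart z.1 z.2 := by
  unfold tangentialPart
  fun_prop

theorem isSphereCritical_iff_tangentialPart (hx : ‖x‖ = 1) :
    IsSphereCritical F x ↔ tangentialPart (fderiv ℝ F x) x = 0 := by
  constructor
  · intro h
    ext w
    simp [tangentialPart, h.fderiv_apply hx w]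
  · intro h v hv
    simpa [tangentialPart, hv] using congrArg (fun T : X →L[ℝ] ℝ => T v) h

theorem isSphereCritical_congr (h : F =ᶠ[𝓝 x] F') :
    IsSphereCritical F x ↔ IsSphereCritical F' x := by
  unfold IsSphereCritical
  rw [h.fderiv_eq]

theorem isSphereNondegenerate_congr (h : F =ᶠ[𝓝 x] F') :
    IsSphereNondegenerate F x ↔ IsSphereNondegenerate F' x := by
  unfold IsSphereNondegenerate
  rw [h.fderiv_eq, h.fderiv.fderiv_eq]

theorem isSphereCritical_add_const (c : ℝ) :
    IsSphereCritical (fun y => F y + c) x ↔ IsSphereCritical F x := by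
  unfold IsSphereCritical
  rw [fderiv_add_const]

theorem isSphereNondegenerate_add_const (c : ℝ) :
    IsSphereNondegenerate (fun y => F y + c) x ↔ IsSphereNondegenerate F x := by
  have h : fderiv ℝ (fun y => F y + c) = fderiv ℝ F := funext fun y => fderiv_add_const c
  unfold IsSphereNondegenerate
  rw [h]

theorem eventually_forall_not_isSphereCritical {A : Type*} [TopologicalSpace A] {P : A → X → ℝ}
    (hP : Continuous fun z : A × X => fderiv ℝ (P z.1) z.2) {K : Set X} (hK : IsCompact K)
    (hKS : ∀ x ∈ K, ‖x‖ = 1) {a₀ : A} (h : ∀ x ∈ K, ¬ IsSphereCritical (P a₀) x) :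
    ∀ᶠ a in 𝓝 a₀, ∀ x ∈ K, ¬ IsSphereCritical (P a) x := by
  have hne : ∀ᶠ a in 𝓝 a₀, ∀ x ∈ K, tangentialPart (fderiv ℝ (P a) x) x ≠ 0 := by
    refine hK.eventually_forall_of_forall_eventually fun x hx => ?_
    have hc : Continuous fun z : A × X => tangentialPart (fderiv ℝ (P z.1) z.2) z.2 :=
      continuous_tangentialPart.comp (hP.prodMk continuous_snd)
    exact hc.continuousAt.eventually_ne
      fun h0 => h x hx ((isSphereCritical_iff_tangentialPart (hKS x hx)).2 h0)
  exact hne.mono fun a ha x hx hcrit =>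
    ha x hx ((isSphereCritical_iff_tangentialPart (hKS x hx)).1 hcrit)

theorem isClosed_sphereCriticalSet (hF : Continuous (fderiv ℝ F)) :
    IsClosed (sphereCriticalSet F) := by
  have h : sphereCriticalSet F =
      {x : X | ‖x‖ = 1} ∩ {x | tangentialPart (fderiv ℝ F x) x = 0} :=
    Set.ext fun x => and_congr_right fun hx => isSphereCritical_iff_tangentialPart hx
  rw [h]
  exact (isClosed_eq continuous_norm continuous_const).inter
    (isClosed_eq (continuous_tangentialPart.comp (hF.prodMk continuous_id)) continuous_const)

variable [FiniteDimensional ℝ X]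

-- The inverse function theorem argument: critical points on the sphere are the zeros of
-- `y ↦ (tangentialPart, ‖y‖² - 1)`, whose derivative at `x` is injective by nondegeneracy.
theorem IsSphereNondegenerate.eventually_not_isSphereCritical (hn : IsSphereNondegenerate F x)
    (hF : DifferentiableAt ℝ (fderiv ℝ F) x) :
    ∀ᶠ y in 𝓝[≠] x, y ∉ sphereCriticalSet F := by
  have hF' := hF.hasFDerivAt
  have hder := (hF'.sub ((hF'.clm_apply (hasFDerivAt_id x)).smul
    (innerSL ℝ (E := X)).hasFDerivAt)).prodMk ((hasFDerivAt_id x).norm_sq)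
  have hne := hder.eventually_ne (c := ((0 : X →L[ℝ] ℝ), (1 : ℝ))) (by
    refine (LinearMap.exists_antilipschitzWith _ ?_).imp fun K hK => hK.2
    rw [LinearMap.ker_eq_bot']
    intro z hz
    by_contra hz0
    have hxz : inner ℝ x z = 0 := by simpa using congrArg Prod.snd hz
    obtain ⟨v, hv, hne⟩ := hn z hxz hz0
    have hv' : innerSL ℝ x v = 0 := hv
    have hzv : innerSL ℝ z v = inner ℝ z v := rfl
    have hz1 := congrArg (fun T : X →L[ℝ] ℝ => T v) (congrArg Prod.fst hz)
    exact hne (by simpa [hv', hzv] using hz1))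
  filter_upwards [hne] with y hy hyc
  exact hy (Prod.ext ((isSphereCritical_iff_tangentialPart hyc.1).1 hyc.2) (by simp [hyc.1]))

theorem IsSphereMorse.finite_sphereCriticalSet (hn : IsSphereMorse F)
    (hF : Differentiable ℝ (fderiv ℝ F)) : (sphereCriticalSet F).Finite := by
  by_contra hinf
  have hcpt : IsCompact (sphereCriticalSet F) :=
    (isCompact_sphere (0 : X) 1).of_isClosed_subset (isClosed_sphereCriticalSet hF.continuous)
      fun x hx => mem_sphere_zero_iff_norm.2 hx.1
  obtain ⟨x, hx, hacc⟩ := Set.Infinite.exists_accPt_of_subset_isCompact hinf hcpt subset_rfl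
  rw [accPt_iff_frequently_nhdsNE] at hacc
  exact hacc ((hn x hx.1 hx.2).eventually_not_isSphereCritical (hF x))

end Stability

/-! ### Generic linear perturbations are Morse -/

section LinearPerturbation

variable {X : Type*} [NormedAddCommGroup X] [InnerProductSpace ℝ X] {F : X → ℝ} {x : X}

theorem hasFDerivAt_norm_unit_smul (hx : ‖x‖ = 1) {r : ℝ} (hr : 0 < r) :
    HasFDerivAt (fun y : X => ‖y‖) (innerSL ℝ x) (r • x) := by
  have hrx : ‖r • x‖ = r := by rw [norm_smul_of_nonneg hr.le, hx, mul_one]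
  have h := ((hasFDerivAt_id (r • x)).norm_sq).sqrt (by simp [hrx, hr.ne'])
  simp only [id, Real.sqrt_sq (norm_nonneg _), hrx] at h
  refine h.congr_fderiv ?_
  ext w
  simp [Real.sqrt_sq hr.le]
  field_simp

theorem hasFDerivAt_log_norm_unit_smul (hx : ‖x‖ = 1) {r : ℝ} (hr : 0 < r) :
    HasFDerivAt (fun y : X => Real.log ‖y‖) (r⁻¹ • innerSL ℝ x) (r • x) := by
  have hrx : ‖r • x‖ = r := by rw [norm_smul_of_nonneg hr.le, hx, mul_one]
  simpa only [hrx] using (hasFDerivAt_norm_unit_smul hx hr).log (by rw [hrx]; exact hr.ne')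

theorem hasFDerivAt_normalize_unit_smul (hx : ‖x‖ = 1) {r : ℝ} (hr : 0 < r) :
    HasFDerivAt (fun y : X => ‖y‖⁻¹ • y)
      (r⁻¹ • (ContinuousLinearMap.id ℝ X - (innerSL ℝ x).smulRight x)) (r • x) := by
  have hrx : ‖r • x‖ = r := by rw [norm_smul_of_nonneg hr.le, hx, mul_one]
  refine (((hasDerivAt_inv (x := ‖r • x‖) (by rw [hrx]; exact hr.ne')).comp_hasFDerivAt (r • x)
    (hasFDerivAt_norm_unit_smul hx hr)).smul (hasFDerivAt_id (r • x))).congr_fderiv ?_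
  ext w
  simp only [Function.comp, hrx, id]
  have hrr : (r ^ 2)⁻¹ * r = r⁻¹ := by field_simp
  simp [smul_smul, mul_right_comm _ _ r, hrr, sub_eq_add_neg]

theorem fderiv_add_inner (hF : Differentiable ℝ F) (a x : X) :
    fderiv ℝ (fun y => F y + inner ℝ a y) x = fderiv ℝ F x + innerSL ℝ a :=
  ((hF x).hasFDerivAt.add (innerSL ℝ a).hasFDerivAt).fderiv

theorem fderiv_fderiv_add_inner (hF : Differentiable ℝ F) (a x : X) :
    fderiv ℝ (fderiv ℝ fun y => F y + inner ℝ a y) x = fderiv ℝ (fderiv ℝ F) x := by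
  rw [funext fun y => fderiv_add_inner hF a y]
  exact fderiv_add_const _

theorem exists_of_not_isSphereNondegenerate (hx : ‖x‖ = 1) (h : ¬ IsSphereNondegenerate F x) :
    ∃ u, u ≠ 0 ∧ inner ℝ x u = 0 ∧ ∃ c : ℝ, ∀ w,
      fderiv ℝ (fderiv ℝ F) x u w = fderiv ℝ F x x * inner ℝ u w + c * inner ℝ x w := by
  simp only [IsSphereNondegenerate, not_forall, not_exists, not_and, not_not] at h
  obtain ⟨u, hxu, hu, hdeg⟩ := h
  refine ⟨u, hu, hxu, fderiv ℝ (fderiv ℝ F) x u x, fun w => ?_⟩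
  have hw := hdeg _ (inner_self_sub_inner_smul hx w)
  simp only [map_sub, map_smul, smul_eq_mul, inner_sub_right, inner_smul_right,
    real_inner_comm x u, hxu] at hw
  linarith

section LagrangeMap

variable [CompleteSpace X]

/-- The map whose value at `eˡ x`, for a unit vector `x`, is the vector `a` for which
`∇(F + ⟨a, ·⟩) x = l x`: all pairs of a linear perturbation of `F` and a critical point of it on
the sphere, with its Lagrange multiplier `l`, are parametrised by the open set `X ∖ {0}`. -/
noncomputable def lagrangeMap (F : X → ℝ) (y : X) : X :=
  Real.log ‖y‖ • ‖y‖⁻¹ • y - gradient F (‖y‖⁻¹ • y)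

theorem lagrangeMap_exp_smul (hx : ‖x‖ = 1) (l : ℝ) :
    lagrangeMap F (Real.exp l • x) = l • x - gradient F x := by
  have hr : ‖Real.exp l • x‖ = Real.exp l := by
    rw [norm_smul_of_nonneg (Real.exp_pos l).le, hx, mul_one]
  rw [lagrangeMap, hr, inv_smul_smul₀ (Real.exp_pos l).ne', Real.log_exp]

theorem exists_hasFDerivAt_gradient (hF : DifferentiableAt ℝ (fderiv ℝ F) x) :
    ∃ H : X →L[ℝ] X, HasFDerivAt (gradient F) H x ∧
      ∀ u w, inner ℝ (H u) w = fderiv ℝ (fderiv ℝ F) x u w := by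
  let D : (X →L[ℝ] ℝ) →L[ℝ] X :=
    { toFun := (InnerProductSpace.toDual ℝ X).symm
      map_add' := map_add _
      map_smul' := by simp
      cont := (InnerProductSpace.toDual ℝ X).symm.continuous }
  exact ⟨D ∘L fderiv ℝ (fderiv ℝ F) x, D.hasFDerivAt.comp x hF.hasFDerivAt,
    fun u w => InnerProductSpace.toDual_symm_apply⟩

theorem hasFDerivAt_lagrangeMap {H : X →L[ℝ] X} (hH : HasFDerivAt (gradient F) H x)
    (hx : ‖x‖ = 1) (l : ℝ) :
    HasFDerivAt (lagrangeMap F)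
      ((Real.exp l)⁻¹ • (l • (ContinuousLinearMap.id ℝ X - (innerSL ℝ x).smulRight x)
        + (innerSL ℝ x).smulRight x
        - H ∘L (ContinuousLinearMap.id ℝ X - (innerSL ℝ x).smulRight x)))
      (Real.exp l • x) := by
  have hr : ‖Real.exp l • x‖ = Real.exp l := by
    rw [norm_smul_of_nonneg (Real.exp_pos l).le, hx, mul_one]
  have hrx : ‖Real.exp l • x‖⁻¹ • Real.exp l • x = x := by
    rw [hr, inv_smul_smul₀ (Real.exp_pos l).ne']
  have hN := hasFDerivAt_normalize_unit_smul hx (Real.exp_pos l)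
  refine (((hasFDerivAt_log_norm_unit_smul hx (Real.exp_pos l)).smul hN).sub
    (HasFDerivAt.comp _ (by rwa [hrx]) hN)).congr_fderiv ?_
  ext w
  simp only [hr, Real.log_exp, sub_apply, add_apply, smul_apply, ContinuousLinearMap.comp_apply,
    ContinuousLinearMap.smulRight_apply, map_smul, smul_assoc,
    inv_smul_smul₀ (Real.exp_pos l).ne']
  module

theorem lagrangeMap_eq_of_isSphereCritical (hF : Differentiable ℝ F) {a : X} (hx : ‖x‖ = 1)
    (hcrit : IsSphereCritical (fun y => F y + inner ℝ a y) x) :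
    lagrangeMap F (Real.exp (fderiv ℝ (fun y => F y + inner ℝ a y) x x) • x) = a := by
  rw [lagrangeMap_exp_smul hx, sub_eq_iff_eq_add]
  refine ext_inner_right ℝ fun w => ?_
  rw [real_inner_smul_left, ← hcrit.fderiv_apply hx w, fderiv_add_inner hF, inner_add_left,
    gradient, InnerProductSpace.toDual_symm_apply, add_comm]
  rfl

end LagrangeMap

variable [FiniteDimensional ℝ X]

theorem det_fderiv_lagrangeMap_eq_zero (hF : DifferentiableAt ℝ (fderiv ℝ F) x) (hx : ‖x‖ = 1)
    {u : X} (hu : u ≠ 0) (hxu : inner ℝ x u = 0) {l c : ℝ}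
    (h : ∀ w, fderiv ℝ (fderiv ℝ F) x u w = l * inner ℝ u w + c * inner ℝ x w) :
    (fderiv ℝ (lagrangeMap F) (Real.exp l • x)).det = 0 := by
  obtain ⟨H, hH, hHF⟩ := exists_hasFDerivAt_gradient hF
  have hHu : H u = l • u + c • x := ext_inner_right ℝ fun w => by
    rw [hHF, h, inner_add_left, real_inner_smul_left, real_inner_smul_left]
  have hker : fderiv ℝ (lagrangeMap F) (Real.exp l • x) (u + c • x) = 0 := by
    simp [(hasFDerivAt_lagrangeMap hH hx l).fderiv, inner_add_right, inner_smul_right, hxu, hx,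
      hHu]
  have hne : u + c • x ≠ 0 := fun h0 => hu <| by
    have := congrArg (fun w => inner ℝ u w) h0
    simpa [inner_add_right, inner_smul_right, real_inner_comm x u, hxu] using this
  exact LinearMap.det_eq_zero_iff_ker_ne_bot.2 ((Submodule.ne_bot_iff _).2 ⟨_, hker, hne⟩)

open MeasureTheory in
theorem ae_isSphereMorse_add_inner [MeasurableSpace X] [BorelSpace X] (μ : Measure X)
    [μ.IsAddHaarMeasure] (hF : Differentiable ℝ F) (hF2 : Differentiable ℝ (fderiv ℝ F)) :
    ∀ᵐ a ∂μ, IsSphereMorse fun y => F y + inner ℝ a y := by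
  have hdiff : ∀ y, y ≠ 0 → DifferentiableAt ℝ (lagrangeMap F) y := fun y hy => by
    obtain ⟨H, hH, -⟩ := exists_hasFDerivAt_gradient (hF2 (‖y‖⁻¹ • y))
    have := hasFDerivAt_lagrangeMap hH (norm_smul_inv_norm hy) (Real.log ‖y‖)
    rw [Real.exp_log (norm_pos_iff.2 hy), smul_inv_smul₀ (norm_ne_zero_iff.2 hy)] at this
    exact this.differentiableAt
  have hSard := addHaar_image_eq_zero_of_det_fderivWithin_eq_zero μ
    (s := {y | y ≠ 0 ∧ (fderiv ℝ (lagrangeMap F) y).det = 0})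
    (fun y hy => (hdiff y hy.1).hasFDerivAt.hasFDerivWithinAt) fun y hy => hy.2
  filter_upwards [measure_eq_zero_iff_ae_notMem.1 hSard] with a ha x hx hcrit
  by_contra hdeg
  obtain ⟨u, hu, hxu, c, hc⟩ := exists_of_not_isSphereNondegenerate hx hdeg
  rw [fderiv_fderiv_add_inner hF] at hc
  refine ha ⟨_, ⟨smul_ne_zero (Real.exp_pos _).ne' ?_, ?_⟩,
    lagrangeMap_eq_of_isSphereCritical hF hx hcrit⟩
  · exact norm_ne_zero_iff.1 (hx ▸ one_ne_zero)
  · exact det_fderiv_lagrangeMap_eq_zero (hF2 x) hx hu hxu hc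

end LinearPerturbation

/-! ### Quadratic functions with prescribed signs on at most four directions -/

/-- The determinant of two vectors of the plane. -/
def planeDet (u v : ℝ × ℝ) : ℝ := u.1 * v.2 - u.2 * v.1

/-- The scalar product of two vectors of the plane. The sup norm of `ℝ × ℝ` is not used. -/
def planeDot (u v : ℝ × ℝ) : ℝ := u.1 * v.1 + u.2 * v.2

/-- The quarter turn of the plane. -/
def planePerp (u : ℝ × ℝ) : ℝ × ℝ := (-u.2, u.1)

/-- Two vectors of the plane have opposite directions. -/
def PlaneOpposite (u v : ℝ × ℝ) : Prop := planeDet u v = 0 ∧ planeDot u v < 0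

/-- The quadratic form on the plane with matrix entries `c = (c₁₁, c₁₂, c₂₂)`. -/
def planeForm (c : ℝ × ℝ × ℝ) (u : ℝ × ℝ) : ℝ :=
  c.1 * u.1 ^ 2 + 2 * c.2.1 * u.1 * u.2 + c.2.2 * u.2 ^ 2

/-- The action on the plane of the symmetric matrix with entries `c = (c₁₁, c₁₂, c₂₂)`. -/
def planeSymm (c : ℝ × ℝ × ℝ) (u : ℝ × ℝ) : ℝ × ℝ :=
  (c.1 * u.1 + c.2.1 * u.2, c.2.1 * u.1 + c.2.2 * u.2)

section PlaneAlgebra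

variable {u v w : ℝ × ℝ}

theorem planeDet_swap (u v : ℝ × ℝ) : planeDet v u = -planeDet u v := by
  unfold planeDet; ring

theorem planeDet_self (u : ℝ × ℝ) : planeDet u u = 0 := by
  unfold planeDet; ring

theorem planeDot_comm (u v : ℝ × ℝ) : planeDot v u = planeDot u v := by
  unfold planeDot; ring

theorem planeDot_planePerp (u v : ℝ × ℝ) : planeDot (planePerp u) v = planeDet u v := by
  simp only [planeDot, planePerp, planeDet]; ring

theorem planeDot_add_left (u v w : ℝ × ℝ) :
    planeDot (u + v) w = planeDot u w + planeDot v w := by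
  simp only [planeDot, Prod.fst_add, Prod.snd_add]; ring

theorem planeDot_smul_left (t : ℝ) (u v : ℝ × ℝ) : planeDot (t • u) v = t * planeDot u v := by
  simp only [planeDot, Prod.smul_fst, Prod.smul_snd, smul_eq_mul]; ring

theorem planeDot_smul_right (t : ℝ) (u v : ℝ × ℝ) : planeDot u (t • v) = t * planeDot u v := by
  rw [planeDot_comm, planeDot_smul_left, planeDot_comm]

theorem planeDet_smul_right (t : ℝ) (u v : ℝ × ℝ) : planeDet u (t • v) = t * planeDet u v := by
  rw [← planeDot_planePerp, planeDot_smul_right, planeDot_planePerp]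

theorem planeDot_zero_left (u : ℝ × ℝ) : planeDot 0 u = 0 := by simp [planeDot]

theorem planeDot_self_pos (h : u ≠ 0) : 0 < planeDot u u := by
  refine (add_nonneg (mul_self_nonneg _) (mul_self_nonneg _)).lt_of_ne' fun h0 => h ?_
  exact Prod.mk_eq_zero.2 (mul_self_add_mul_self_eq_zero.1 h0)

theorem planeSymm_zero (c : ℝ × ℝ × ℝ) : planeSymm c 0 = 0 := by simp [planeSymm]

theorem planeDot_planeSymm_self (c : ℝ × ℝ × ℝ) (u : ℝ × ℝ) :
    planeDot (planeSymm c u) u = planeForm c u := by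
  simp only [planeDot, planeSymm, planeForm]; ring

theorem planeSymm_ne_zero {c : ℝ × ℝ × ℝ} (hc : c.1 * c.2.2 - c.2.1 ^ 2 ≠ 0) (hu : u ≠ 0) :
    planeSymm c u ≠ 0 := by
  intro h
  obtain ⟨h₁, h₂⟩ := Prod.mk_eq_zero.1 h
  have hfst : (c.1 * c.2.2 - c.2.1 ^ 2) * u.1 = 0 := by linear_combination c.2.2 * h₁ - c.2.1 * h₂
  have hsnd : (c.1 * c.2.2 - c.2.1 ^ 2) * u.2 = 0 := by linear_combination c.1 * h₂ - c.2.1 * h₁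
  exact hu (Prod.ext ((mul_eq_zero.1 hfst).resolve_left hc) ((mul_eq_zero.1 hsnd).resolve_left hc))

theorem exists_planeDot_eq (huv : planeDet u v ≠ 0) (a b : ℝ) :
    ∃ w, planeDot w u = a ∧ planeDot w v = b := by
  refine ⟨(b / planeDet u v) • planePerp u + (-a / planeDet u v) • planePerp v, ?_, ?_⟩ <;>
    simp only [planeDot_add_left, planeDot_smul_left, planeDot_planePerp, planeDet_self,
      planeDet_swap u v] <;>
    field_simp <;> ring

theorem PlaneOpposite.ne_zero (h : PlaneOpposite u v) : u ≠ 0 := by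
  rintro rfl
  exact h.2.ne (planeDot_zero_left v)

theorem PlaneOpposite.symm (h : PlaneOpposite u v) : PlaneOpposite v u :=
  ⟨by rw [planeDet_swap, h.1, neg_zero], by rw [planeDot_comm]; exact h.2⟩

theorem planeDot_self_smul_of_planeDet_eq_zero (h : planeDet u v = 0) :
    planeDot u u • v = planeDot u v • u := by
  simp only [planeDet] at h
  ext <;> simp only [Prod.smul_fst, Prod.smul_snd, smul_eq_mul, planeDot]
  · linear_combination -u.2 * h
  · linear_combination u.1 * h

theorem exists_eq_smul_of_planeDet_eq_zero (hu : u ≠ 0) (h : planeDet u v = 0) :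
    v = (planeDot u v / planeDot u u) • u := by
  rw [div_eq_inv_mul, mul_smul, ← planeDot_self_smul_of_planeDet_eq_zero h,
    inv_smul_smul₀ (planeDot_self_pos hu).ne']

theorem PlaneOpposite.exists_eq_smul (h : PlaneOpposite u v) : ∃ t : ℝ, t < 0 ∧ v = t • u :=
  ⟨_, div_neg_of_neg_of_pos h.2 (planeDot_self_pos h.ne_zero),
    exists_eq_smul_of_planeDet_eq_zero h.ne_zero h.1⟩

theorem sameRay_of_planeDet_eq_zero (hdet : planeDet u v = 0) (hdot : 0 ≤ planeDot u v) :
    SameRay ℝ u v := by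
  rcases eq_or_ne u 0 with rfl | hu
  · exact SameRay.zero_left v
  · rw [exists_eq_smul_of_planeDet_eq_zero hu hdet]
    exact SameRay.sameRay_nonneg_smul_right u (div_nonneg hdot (planeDot_self_pos hu).le)

theorem planeOpposite_iff_sameRay_neg (hu : u ≠ 0) (hv : v ≠ 0) :
    PlaneOpposite u v ↔ SameRay ℝ v (-u) := by
  constructor
  · intro h
    obtain ⟨t, ht, rfl⟩ := h.exists_eq_smul
    rw [← neg_smul_neg]
    exact SameRay.sameRay_nonneg_smul_left (-u) (neg_pos.2 ht).le
  · intro h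
    obtain ⟨r, hr, rfl⟩ := h.symm.exists_pos_left (neg_ne_zero.2 hu) hv
    rw [smul_neg, ← neg_smul]
    refine ⟨by rw [planeDet_smul_right, planeDet_self, mul_zero], ?_⟩
    rw [planeDot_smul_right, neg_mul]
    exact neg_neg_of_pos (mul_pos hr (planeDot_self_pos hu))

theorem PlaneOpposite.planeDot_pos_iff (h : PlaneOpposite u v) (w : ℝ × ℝ) :
    0 < planeDot w v ↔ planeDot w u < 0 := by
  obtain ⟨t, ht, rfl⟩ := h.exists_eq_smul
  rw [planeDot_smul_right, mul_pos_iff, and_iff_right ht, or_iff_right (fun h => lt_asymm h.1 ht)]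

theorem PlaneOpposite.planeDet_eq_zero_iff (h : PlaneOpposite u v) (w : ℝ × ℝ) :
    planeDet w v = 0 ↔ planeDet w u = 0 := by
  obtain ⟨t, ht, rfl⟩ := h.exists_eq_smul
  rw [planeDet_smul_right, mul_eq_zero, or_iff_right ht.ne]

end PlaneAlgebra

section PlaneModel

variable {ι : Type*} {d : ι → ℝ × ℝ} {s : ι → ℝ}

/-- No two of the vectors have the same direction. -/
def PlaneDistinct (d : ι → ℝ × ℝ) : Prop :=
  ∀ i j, i ≠ j → planeDet (d i) (d j) ≠ 0 ∨ planeDot (d i) (d j) < 0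

/-- The vectors do not lie in a closed half-plane. -/
def PlaneBalanced (d : ι → ℝ × ℝ) : Prop :=
  ∀ w : ℝ × ℝ, w ≠ 0 → ∃ i, planeDot w (d i) < 0

/-- If two of the vectors are opposite, then each of them is opposite to some other. -/
def PlanePaired (d : ι → ℝ × ℝ) : Prop :=
  (∃ i j, PlaneOpposite (d i) (d j)) → ∀ i, ∃ j, PlaneOpposite (d i) (d j)

/-- The function `x ↦ planeDot w x + planeForm c x` increases (`s i = 1`) or decreases
(`s i = -1`) to one side of `0` along every curve with velocity `d i` and acceleration `k i` at
`0`, already to second order, and it has at worst a nondegenerate critical point at `0`. -/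
def IsPlaneModel (d k : ι → ℝ × ℝ) (s : ι → ℝ) (w : ℝ × ℝ) (c : ℝ × ℝ × ℝ) : Prop :=
  (∀ i, 0 < s i * planeDot w (d i) ∨ planeDot w (d i) = 0 ∧
    0 < s i * (planeDot w (k i) + 2 * planeForm c (d i))) ∧
  (w ≠ 0 ∨ c.1 * c.2.2 - c.2.1 ^ 2 ≠ 0)

theorem PlaneDistinct.not_opposite_opposite (hd : PlaneDistinct d) {i j l : ι} (hil : i ≠ l)
    (hij : PlaneOpposite (d i) (d j)) (hjl : PlaneOpposite (d j) (d l)) : False := by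
  rcases hd i l hil with h | h
  · exact h ((hjl.planeDet_eq_zero_iff _).2 hij.1)
  · exact lt_asymm h ((hjl.planeDot_pos_iff (d i)).2 hij.2)

theorem PlaneDistinct.planeDet_ne_zero (hd : PlaneDistinct d) {i j : ι} (hij : i ≠ j)
    (hopp : ¬ PlaneOpposite (d i) (d j)) : planeDet (d i) (d j) ≠ 0 := fun h0 =>
  (hd i j hij).elim (· h0) fun h => hopp ⟨h0, h⟩

theorem eventually_pos_mul_add {a : ℝ} (ha : 0 < a) (b : ℝ) : ∀ᶠ C : ℝ in atTop, 0 < a * C + b :=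
  (tendsto_atTop_add_const_right _ b (tendsto_id.const_mul_atTop ha)).eventually_gt_atTop 0

theorem planeForm_add_smul (c : ℝ × ℝ × ℝ) (t : ℝ) (u : ℝ × ℝ) :
    planeForm (c + t • (1, 0, 1)) u = planeForm c u + t * planeDot u u := by
  simp only [planeForm, planeDot, Prod.fst_add, Prod.snd_add, Prod.smul_fst, Prod.smul_snd,
    smul_eq_mul]
  ring

theorem exists_isPlaneModel_of_linear [Finite ι] (hd0 : ∀ i, d i ≠ 0) (k : ι → ℝ × ℝ)
    {w : ℝ × ℝ} (hw : w ≠ 0) {e : ℝ}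
    (h : ∀ i, 0 < s i * planeDot w (d i) ∨ planeDot w (d i) = 0 ∧ 0 < s i * e) :
    ∃ w c, IsPlaneModel d k s w c := by
  have hlarge : ∀ᶠ C : ℝ in atTop, ∀ i, 0 < s i * e →
      0 < s i * (planeDot w (k i) + 2 * planeForm (0 + (C * e) • (1, 0, 1)) (d i)) := by
    refine eventually_all.2 fun i => ?_
    by_cases hi : 0 < s i * e
    · filter_upwards [eventually_pos_mul_add (mul_pos hi (planeDot_self_pos (hd0 i)))
        (s i * planeDot w (k i) / 2)] with C hC _
      rw [planeForm_add_smul]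
      simp only [planeForm, Prod.fst_zero, Prod.snd_zero]
      linarith
    · exact Eventually.of_forall fun C h => absurd h hi
  obtain ⟨C, hC⟩ := hlarge.exists
  exact ⟨w, _, fun i => (h i).imp_right fun hi => ⟨hi.1, hC i hi.2⟩, Or.inl hw⟩

theorem eventually_planeForm_nondegenerate (c : ℝ × ℝ × ℝ) {e : ℝ} (he : e ≠ 0) :
    ∀ᶠ t : ℝ in 𝓝[>] 0, (c.1 + t * e) * (c.2.2 + t * e) - c.2.1 ^ 2 ≠ 0 := by
  let p : Polynomial ℝ := .C (e ^ 2) * .X ^ 2 + .C (e * (c.1 + c.2.2)) * .X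
    + .C (c.1 * c.2.2 - c.2.1 ^ 2)
  have hp : p ≠ 0 := by
    rw [← Polynomial.leadingCoeff_ne_zero, Polynomial.leadingCoeff_quadratic (pow_ne_zero 2 he)]
    exact pow_ne_zero 2 he
  have hfin := (Polynomial.finite_setOfPred_isRoot hp).compl_mem_cofinite
  filter_upwards [nhdsGT_le_nhdsNE 0 (nhdsNE_le_cofinite _ hfin)] with t ht h0
  refine ht ?_
  simp only [p, mem_ofPred_eq, Polynomial.IsRoot, Polynomial.eval_add, Polynomial.eval_mul,
    Polynomial.eval_C, Polynomial.eval_pow, Polynomial.eval_X]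
  linear_combination h0

theorem exists_isPlaneModel_of_form [Finite ι] (hd0 : ∀ i, d i ≠ 0) (k : ι → ℝ × ℝ)
    {c : ℝ × ℝ × ℝ} {e : ℝ} (he : e ≠ 0)
    (h : ∀ i, 0 < s i * planeForm c (d i) ∨ planeForm c (d i) = 0 ∧ 0 < s i * e) :
    ∃ w c, IsPlaneModel d k s w c := by
  have hsmall : ∀ᶠ t : ℝ in 𝓝[>] 0, ∀ i,
      0 < s i * planeForm (c + (t * e) • (1, 0, 1)) (d i) := by
    refine eventually_all.2 fun i => ?_
    simp only [planeForm_add_smul]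
    rcases h i with hi | ⟨hi0, hi⟩
    · have hcont : Continuous fun t : ℝ =>
          s i * (planeForm c (d i) + t * e * planeDot (d i) (d i)) := by fun_prop
      exact nhdsWithin_le_nhds (hcont.continuousAt.eventually_const_lt (by simpa using hi))
    · filter_upwards [self_mem_nhdsWithin] with t ht
      have := mul_pos (mul_pos ht hi) (planeDot_self_pos (hd0 i))
      rw [hi0]
      linarith
  obtain ⟨t, ht, hdet⟩ := (hsmall.and (eventually_planeForm_nondegenerate c he)).exists
  refine ⟨0, c + (t * e) • (1, 0, 1), fun i => Or.inr ⟨planeDot_zero_left _, ?_⟩, Or.inr ?_⟩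
  · rw [planeDot_zero_left]
    linarith [ht i]
  · simpa using hdet

theorem card_eq_four_of_ne [Fintype ι] (hcard : Fintype.card ι ≤ 4) {a b m n : ι} (hab : a ≠ b)
    (ham : a ≠ m) (han : a ≠ n) (hbm : b ≠ m) (hbn : b ≠ n) (hmn : m ≠ n) :
    Fintype.card ι = 4 ∧ ∀ j, j = a ∨ j = b ∨ j = m ∨ j = n := by
  classical
  have h4 : ({a, b, m, n} : Finset ι).card = 4 := by
    simp [Finset.card_insert_of_notMem, hab, ham, han, hbm, hbn, hmn]
  have huniv : Fintype.card ι = 4 := le_antisymm hcard (h4 ▸ Finset.card_le_univ _)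
  refine ⟨huniv, fun j => ?_⟩
  have hj := Finset.mem_univ j
  rw [← Finset.eq_univ_of_card _ (h4.trans huniv.symm)] at hj
  simpa using hj

theorem PlaneDistinct.opposite_of_paired [Fintype ι] (hd : PlaneDistinct d)
    (hcard : Fintype.card ι ≤ 4) (hpair : Fintype.card ι = 4 → PlanePaired d) {m o i l : ι}
    (hmo : PlaneOpposite (d m) (d o)) (him : i ≠ m) (hio : i ≠ o) (hlm : l ≠ m) (hlo : l ≠ o)
    (hli : l ≠ i) : PlaneOpposite (d i) (d l) := by
  have ne_of_opposite {a b : ι} (h : PlaneOpposite (d a) (d b)) : b ≠ a := by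
    rintro rfl
    exact lt_asymm h.2 (planeDot_self_pos h.ne_zero)
  obtain ⟨h4, huniv⟩ := card_eq_four_of_ne hcard (ne_of_opposite hmo).symm him.symm hlm.symm
    hio.symm hlo.symm hli.symm
  obtain ⟨j, hij⟩ := hpair h4 ⟨m, o, hmo⟩ i
  rcases huniv j with rfl | rfl | rfl | rfl
  · exact (hd.not_opposite_opposite hio hij hmo).elim
  · exact (hd.not_opposite_opposite him hij hmo.symm).elim
  · exact (ne_of_opposite hij rfl).elim
  · exact hij

theorem PlaneOpposite.mul_planeDot_pos {u v : ℝ × ℝ} (h : PlaneOpposite u v) {w : ℝ × ℝ}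
    {a b : ℝ} (hab : b = -a) (ha : 0 < a * planeDot w u) : 0 < b * planeDot w v := by
  obtain ⟨t, ht, rfl⟩ := h.exists_eq_smul
  rw [hab, planeDot_smul_right]
  linarith [mul_pos (neg_pos.2 ht) ha]

theorem exists_isPlaneModel_of_linear_of_opposite [Finite ι] (hd0 : ∀ i, d i ≠ 0)
    (k : ι → ℝ × ℝ) {m o : ι} (hmo : PlaneOpposite (d m) (d o)) (hsmo : s o = -s m)
    {w : ℝ × ℝ} (e : ℝ) (hm : 0 < s m * planeDot w (d m))
    (h : ∀ i, i ≠ m → i ≠ o → 0 < s i * planeDot w (d i) ∨ planeDot w (d i) = 0 ∧ 0 < s i * e) :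
    ∃ w c, IsPlaneModel d k s w c := by
  refine exists_isPlaneModel_of_linear hd0 k (w := w) (e := e) ?_ fun i => ?_
  · rintro rfl
    simp [planeDot_zero_left] at hm
  · rcases eq_or_ne i m with rfl | him
    · exact Or.inl hm
    rcases eq_or_ne i o with rfl | hio
    · exact Or.inl (hmo.mul_planeDot_pos hsmo hm)
    exact h i him hio

theorem exists_isPlaneModel_of_opposite [Fintype ι] (hd0 : ∀ i, d i ≠ 0) (hd : PlaneDistinct d)
    (hcard : Fintype.card ι ≤ 4) (hpair : Fintype.card ι = 4 → PlanePaired d)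
    (hs : ∀ i, s i = 1 ∨ s i = -1) (k : ι → ℝ × ℝ) {m o : ι}
    (hmo : PlaneOpposite (d m) (d o)) (hsmo : s o = -s m) : ∃ w c, IsPlaneModel d k s w c := by
  have hsq (i : ι) : 0 < s i * s i := by rcases hs i with h | h <;> norm_num [h]
  by_cases hi : ∃ i, i ≠ m ∧ i ≠ o
  · obtain ⟨i, him, hio⟩ := hi
    have hdet : planeDet (d i) (d m) ≠ 0 := hd.planeDet_ne_zero him fun h =>
      hd.not_opposite_opposite hio h hmo
    have hrest {l : ι} (hlm : l ≠ m) (hlo : l ≠ o) (hli : l ≠ i) : PlaneOpposite (d i) (d l) :=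
      hd.opposite_of_paired hcard hpair hmo him hio hlm hlo hli
    by_cases hl : ∃ l, l ≠ m ∧ l ≠ o ∧ l ≠ i ∧ s l = s i
    · obtain ⟨l, hlm, hlo, hli, hsl⟩ := hl
      obtain ⟨w, hwi, hwm⟩ := exists_planeDot_eq hdet 0 (s m)
      refine exists_isPlaneModel_of_linear_of_opposite hd0 k hmo hsmo (s i)
        (by rw [hwm]; exact hsq m) fun j hjm hjo => Or.inr ?_
      rcases eq_or_ne j i with rfl | hji
      · exact ⟨hwi, hsq j⟩
      obtain rfl : j = l := by
        by_contra hne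
        exact hd.not_opposite_opposite hne (hrest hjm hjo hji).symm (hrest hlm hlo hli)
      obtain ⟨t, -, ht⟩ := (hrest hlm hlo hli).exists_eq_smul
      exact ⟨by rw [ht, planeDot_smul_right, hwi, mul_zero], hsl ▸ hsq j⟩
    · push Not at hl
      obtain ⟨w, hwi, hwm⟩ := exists_planeDot_eq hdet (s i) (s m)
      have hi : 0 < s i * planeDot w (d i) := by rw [hwi]; exact hsq i
      refine exists_isPlaneModel_of_linear_of_opposite hd0 k hmo hsmo 0
        (by rw [hwm]; exact hsq m) fun j hjm hjo => Or.inl ?_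
      rcases eq_or_ne j i with rfl | hji
      · exact hi
      refine (hrest hjm hjo hji).mul_planeDot_pos ?_ hi
      have := hl j hjm hjo hji
      grind
  · push Not at hi
    refine exists_isPlaneModel_of_linear_of_opposite hd0 k hmo hsmo (w := s m • d m) 0 ?_
      fun i him hio => absurd (hi i him) hio
    rw [planeDot_smul_left, ← mul_assoc]
    exact mul_pos (hsq m) (planeDot_self_pos (hd0 m))

theorem exists_separating {a b m n : ℝ × ℝ} (hab : planeDet a b ≠ 0)
    (hbal : ∀ w : ℝ × ℝ, w ≠ 0 →
      planeDot w a < 0 ∨ planeDot w b < 0 ∨ planeDot w m < 0 ∨ planeDot w n < 0)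
    (hm : planeDet m a * planeDet m b < 0) (hn : 0 < planeDet n a * planeDet n b) :
    ∃ w, 0 < planeDot w a ∧ 0 < planeDot w b ∧ planeDot w m < 0 ∧ planeDot w n < 0 := by
  wlog hpos : 0 < planeDet a b generalizing a b
  · obtain ⟨w, hb, ha, hmn⟩ := this (a := b) (b := a)
      (by rwa [planeDet_swap, neg_ne_zero]) (fun w hw => by have := hbal w hw; tauto)
      (by rwa [mul_comm]) (by rwa [mul_comm])
      (by rw [planeDet_swap]; exact neg_pos.2 (hab.lt_of_le (not_lt.1 hpos)))
    exact ⟨w, ha, hb, hmn⟩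
  -- `α` and `β` are, up to the factor `planeDet a b`, the coordinates in the basis `a, b`.
  let α : ℝ × ℝ := planePerp (-b)
  let β : ℝ × ℝ := planePerp a
  have hα (x : ℝ × ℝ) : planeDot α x = planeDet x b := by
    rw [planeDot_planePerp]; simp only [planeDet, Prod.fst_neg, Prod.snd_neg]; ring
  have hβ (x : ℝ × ℝ) : planeDot β x = -planeDet x a := by
    rw [planeDot_planePerp, planeDet_swap]
  have hα0 : α ≠ 0 := fun h => hpos.ne' (by rw [← hα, h, planeDot_zero_left])
  have hβ0 : β ≠ 0 := fun h =>
    hpos.ne' (by rw [← planeDot_planePerp a, ← planeDot_zero_left b, ← h])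
  have hbalα := hbal α hα0
  have hbalβ := hbal β hβ0
  simp only [hα, hβ, planeDet_self, planeDet_swap a b] at hbalα hbalβ
  have hm' : planeDet m b < 0 ∧ 0 < planeDet m a := by
    rcases mul_neg_iff.1 hm with h | h <;> rcases mul_pos_iff.1 hn with h' | h' <;> grind
  rcases mul_pos_iff.1 hn with ⟨hna, hnb⟩ | ⟨hna, hnb⟩
  · refine ⟨planeDet n a • α + (2 * planeDet n b) • β, ?_, ?_, ?_, ?_⟩ <;>
      simp only [planeDot_add_left, planeDot_smul_left, hα, hβ, planeDet_self,
        planeDet_swap a b] <;>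
      nlinarith [mul_pos hna hpos, mul_pos hnb hpos, mul_pos hna (neg_pos.2 hm'.1),
        mul_pos hnb hm'.2]
  · refine ⟨(-(2 * planeDet n a)) • α + (-planeDet n b) • β, ?_, ?_, ?_, ?_⟩ <;>
      simp only [planeDot_add_left, planeDot_smul_left, hα, hβ, planeDet_self,
        planeDet_swap a b] <;>
      nlinarith [mul_pos_of_neg_of_neg hna hm'.1, mul_neg_of_neg_of_pos hna hpos,
        mul_neg_of_neg_of_pos hnb hpos, mul_neg_of_neg_of_pos hnb hm'.2]

theorem exists_sign_card_le_two [Fintype ι] (hcard : Fintype.card ι ≤ 4)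
    (hs : ∀ i, s i = 1 ∨ s i = -1) :
    ∃ e : ℝ, (e = 1 ∨ e = -1) ∧ ((∀ i, s i = -e) ∨
      ∃ m n, s m = e ∧ s n = e ∧ ∀ i, s i = e → i = m ∨ i = n) := by
  classical
  obtain ⟨e, he, hT⟩ : ∃ e : ℝ, (e = 1 ∨ e = -1) ∧
      (Finset.univ.filter fun i => s i = e).card ≤ 2 := by
    by_contra! h
    have hdisj : Disjoint (Finset.univ.filter fun i => s i = 1)
        (Finset.univ.filter fun i => s i = -1) :=
      Finset.disjoint_filter.2 fun i _ h1 h2 => by norm_num [h1] at h2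
    have := Finset.card_union_of_disjoint hdisj
    have := Finset.card_le_univ ((Finset.univ.filter fun i => s i = 1) ∪
      Finset.univ.filter fun i => s i = -1)
    have := h 1 (Or.inl rfl)
    have := h (-1) (Or.inr rfl)
    omega
  refine ⟨e, he, ?_⟩
  by_cases hne : ∃ m, s m = e
  · obtain ⟨m, hm⟩ := hne
    refine Or.inr ⟨m, ?_⟩
    by_cases hn : ∃ n, s n = e ∧ n ≠ m
    · obtain ⟨n, hn, hnm⟩ := hn
      refine ⟨n, hm, hn, fun i hi => ?_⟩
      by_contra! hne
      exact hT.not_gt (Finset.two_lt_card.2 ⟨i, by simpa, m, by simpa, n, by simpa,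
        hne.1, hne.2, hnm.symm⟩)
    · push Not at hn
      exact ⟨m, hm, hm, fun i hi => Or.inl (hn i hi)⟩
  · push Not at hne
    exact Or.inl fun i => by grind

theorem planeForm_planeDet_mul (u v x : ℝ × ℝ) (t : ℝ) :
    planeForm (t * (u.2 * v.2), t * (-(u.1 * v.2 + u.2 * v.1) / 2), t * (u.1 * v.1)) x =
      t * (planeDet u x * planeDet v x) := by
  simp only [planeForm, planeDet]; ring

theorem exists_isPlaneModel_of_separated [Fintype ι] (hd0 : ∀ i, d i ≠ 0)
    (hcard : Fintype.card ι ≤ 4) (hbal : Fintype.card ι = 4 → PlaneBalanced d) (k : ι → ℝ × ℝ)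
    {e : ℝ} (he : e = 1 ∨ e = -1) {a b m n : ι} (ha : s a = -e) (hb : s b = -e) (hm : s m = e)
    (hn : s n = e) (hab : planeDet (d a) (d b) ≠ 0)
    (hma : planeDet (d m) (d a) * planeDet (d m) (d b) < 0)
    (hna : 0 < planeDet (d n) (d a) * planeDet (d n) (d b)) : ∃ w c, IsPlaneModel d k s w c := by
  have hab' : a ≠ b := fun h => hab (h ▸ planeDet_self _)
  have hmn : m ≠ n := fun h => lt_asymm hma (h ▸ hna)
  have ne_of_sign {i j : ι} (hi : s i = -e) (hj : s j = e) : i ≠ j := by grind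
  obtain ⟨h4, huniv⟩ := card_eq_four_of_ne hcard hab' (ne_of_sign ha hm) (ne_of_sign ha hn)
    (ne_of_sign hb hm) (ne_of_sign hb hn) hmn
  obtain ⟨w, hwa, hwb, hwm, hwn⟩ := exists_separating hab (fun w hw => by
    obtain ⟨j, hj⟩ := hbal h4 w hw
    rcases huniv j with rfl | rfl | rfl | rfl <;> tauto) hma hna
  refine exists_isPlaneModel_of_linear hd0 k (w := -e • w) (e := 0) ?_ fun j => Or.inl ?_
  · refine smul_ne_zero (by grind) ?_
    rintro rfl
    exact hwa.ne' (planeDot_zero_left _)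
  · rw [planeDot_smul_left]
    rcases huniv j with rfl | rfl | rfl | rfl <;> rcases he with rfl | rfl <;>
      simp [ha, hb, hm, hn, hwa, hwb, hwm, hwn]

theorem exists_isPlaneModel_of_not_opposite [Fintype ι] (hd0 : ∀ i, d i ≠ 0)
    (hd : PlaneDistinct d) (hcard : Fintype.card ι ≤ 4)
    (hbal : Fintype.card ι = 4 → PlaneBalanced d) (hs : ∀ i, s i = 1 ∨ s i = -1)
    (hopp : ∀ i j, PlaneOpposite (d i) (d j) → s i = s j) (k : ι → ℝ × ℝ) :
    ∃ w c, IsPlaneModel d k s w c := by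
  obtain ⟨e, he, hall | ⟨m, n, hm, hn, hmn⟩⟩ := exists_sign_card_le_two hcard hs
  · refine exists_isPlaneModel_of_form hd0 k (c := 0) (e := -e) (by grind) fun i => Or.inr ?_
    rcases he with rfl | rfl <;> simp [planeForm, hall i]
  let g (i : ι) : ℝ := planeDet (d m) (d i) * planeDet (d n) (d i)
  have hdet {i j : ι} (hi : s i = e) (hj : s j = -e) : planeDet (d i) (d j) ≠ 0 :=
    hd.planeDet_ne_zero (by grind) fun h => by grind
  have hg {i : ι} (hi : s i = -e) : g i ≠ 0 := mul_ne_zero (hdet hm hi) (hdet hn hi)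
  by_cases hsign : ∃ t : ℝ, ∀ i, s i = -e → 0 < t * g i
  · -- The degenerate form `g` vanishes on `d m` and `d n` and has one sign on the other vectors.
    obtain ⟨t, ht⟩ := hsign
    refine exists_isPlaneModel_of_form hd0 k (e := e) (by grind) (fun i => ?_)
      (c := (-e * t * ((d m).2 * (d n).2),
        -e * t * (-((d m).1 * (d n).2 + (d m).2 * (d n).1) / 2), -e * t * ((d m).1 * (d n).1)))
    rw [planeForm_planeDet_mul]
    by_cases hi : s i = e
    · refine Or.inr ⟨?_, by rcases he with rfl | rfl <;> norm_num [hi]⟩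
      rcases hmn i hi with rfl | rfl <;> simp [planeDet_self]
    · have hi' : s i = -e := by grind
      refine Or.inl ((ht i hi').trans_eq ?_)
      rcases he with rfl | rfl <;> rw [hi'] <;> ring
  · push Not at hsign
    obtain ⟨a, ha, hga⟩ := hsign 1
    obtain ⟨b, hb, hgb⟩ := hsign (-1)
    replace hga : g a < 0 := (hg ha).lt_of_le (by linarith)
    replace hgb : 0 < g b := (hg hb).lt_of_le' (by linarith)
    have hab : planeDet (d a) (d b) ≠ 0 := by
      refine hd.planeDet_ne_zero (by rintro rfl; exact lt_asymm hga hgb) fun h => ?_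
      obtain ⟨t, -, hbt⟩ := h.exists_eq_smul
      have hgt : g b = t ^ 2 * g a := by
        simp only [g, hbt, planeDet_smul_right]; ring
      exact hgb.not_ge (hgt ▸ mul_nonpos_of_nonneg_of_nonpos (sq_nonneg t) hga.le)
    have hprod : (planeDet (d m) (d a) * planeDet (d m) (d b)) *
        (planeDet (d n) (d a) * planeDet (d n) (d b)) < 0 := by
      linear_combination mul_neg_of_neg_of_pos hga hgb
    rcases mul_neg_iff.1 hprod with ⟨hma, hna⟩ | ⟨hma, hna⟩
    · exact exists_isPlaneModel_of_separated hd0 hcard hbal k he ha hb hn hm hab hna hma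
    · exact exists_isPlaneModel_of_separated hd0 hcard hbal k he ha hb hm hn hab hma hna

theorem exists_isPlaneModel [Fintype ι] (hd0 : ∀ i, d i ≠ 0) (hd : PlaneDistinct d)
    (hcard : Fintype.card ι ≤ 4) (hbal : Fintype.card ι = 4 → PlaneBalanced d)
    (hpair : Fintype.card ι = 4 → PlanePaired d) (hs : ∀ i, s i = 1 ∨ s i = -1)
    (k : ι → ℝ × ℝ) : ∃ w c, IsPlaneModel d k s w c := by
  by_cases hmix : ∃ m o, PlaneOpposite (d m) (d o) ∧ s o = -s m
  · obtain ⟨m, o, hmo, hsmo⟩ := hmix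
    exact exists_isPlaneModel_of_opposite hd0 hd hcard hpair hs k hmo hsmo
  · push Not at hmix
    refine exists_isPlaneModel_of_not_opposite hd0 hd hcard hbal hs (fun i j hij => ?_) k
    grind

end PlaneModel

/-! ### Monotone functions on the unit interval -/

theorem nhdsGT_zero_le_nhdsWithin_Icc : 𝓝[>] (0 : ℝ) ≤ 𝓝[Icc 0 1] 0 := by
  rw [← nhdsWithin_Ioo_eq_nhdsGT (zero_lt_one (α := ℝ))]
  exact nhdsWithin_mono _ Ioo_subset_Icc_self

theorem nhdsLT_one_le_nhdsWithin_Icc : 𝓝[<] (1 : ℝ) ≤ 𝓝[Icc 0 1] 1 := by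
  rw [← nhdsWithin_Ioo_eq_nhdsLT (zero_lt_one (α := ℝ))]
  exact nhdsWithin_mono _ Ioo_subset_Icc_self

theorem eventually_deriv_pos_of_second_order {g : ℝ → ℝ} (hg : ContDiffOn ℝ 2 g (Icc 0 1)) {s : ℝ}
    (h : 0 < s * derivWithin g (Icc 0 1) 0 ∨ derivWithin g (Icc 0 1) 0 = 0 ∧
      0 < s * derivWithin (derivWithin g (Icc 0 1)) (Icc 0 1) 0) :
    ∀ᶠ t in 𝓝[>] (0 : ℝ), 0 < s * deriv g t := by
  have hg' : ContDiffOn ℝ 1 (derivWithin g (Icc 0 1)) (Icc 0 1) :=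
    hg.derivWithin (uniqueDiffOn_Icc zero_lt_one) (by norm_num)
  have h0 : (0 : ℝ) ∈ Icc (0 : ℝ) 1 := by simp
  have hIoo : Ioo (0 : ℝ) 1 ∈ 𝓝[>] (0 : ℝ) := Ioo_mem_nhdsGT zero_lt_one
  suffices H : ∀ᶠ t in 𝓝[>] (0 : ℝ), 0 < s * derivWithin g (Icc 0 1) t by
    filter_upwards [H, hIoo] with t ht ht'
    rwa [derivWithin_of_mem_nhds (Icc_mem_nhds ht'.1 ht'.2)] at ht
  rcases h with h | ⟨h1, h2⟩
  · have hcont : Tendsto (fun t => s * derivWithin g (Icc 0 1) t) (𝓝[Icc 0 1] 0)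
        (𝓝 (s * derivWithin g (Icc 0 1) 0)) := (hg'.continuousOn 0 h0).const_mul s
    exact (hcont.mono_left nhdsGT_zero_le_nhdsWithin_Icc).eventually_const_lt h
  · have hderiv := ((hg'.differentiableOn one_ne_zero 0 h0).hasDerivWithinAt).mono
      (Ioo_subset_Icc_self (a := (0 : ℝ)) (b := 1))
    rw [hasDerivWithinAt_iff_tendsto_slope' (by simp), nhdsWithin_Ioo_eq_nhdsGT zero_lt_one]
      at hderiv
    filter_upwards [(hderiv.const_mul s).eventually_const_lt h2, hIoo] with t ht ht'
    rw [slope_def_field, h1, sub_zero, sub_zero, ← mul_div_assoc] at ht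
    exact (div_pos_iff_of_pos_right ht'.1).1 ht

/-- The smooth monotone function which is `0` up to `u` and `1` from `v` on, for `u < v`. -/
noncomputable def smoothStep (u v t : ℝ) : ℝ := Real.smoothTransition ((t - u) / (v - u))

section SmoothStep

variable {u v t : ℝ}

theorem contDiff_smoothStep (u v : ℝ) : ContDiff ℝ ∞ (smoothStep u v) :=
  Real.smoothTransition.contDiff.comp ((contDiff_id.sub contDiff_const).div_const (v - u))

theorem smoothStep_of_le (huv : u < v) (ht : t ≤ u) : smoothStep u v t = 0 :=
  Real.smoothTransition.zero_of_nonpos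
    (div_nonpos_of_nonpos_of_nonneg (sub_nonpos.2 ht) (sub_pos.2 huv).le)

theorem smoothStep_of_ge (huv : u < v) (ht : v ≤ t) : smoothStep u v t = 1 :=
  Real.smoothTransition.one_of_one_le
    ((one_le_div (sub_pos.2 huv)).2 (sub_le_sub_right ht u))

theorem deriv_smoothStep_nonneg (huv : u < v) : 0 ≤ deriv (smoothStep u v) t := by
  refine Monotone.deriv_nonneg fun x y hxy => Real.smoothTransition.monotone ?_
  exact div_le_div_of_nonneg_right (sub_le_sub_right hxy u) (sub_pos.2 huv).le

theorem deriv_smoothStep_of_notMem (huv : u < v) (ht : t ∉ Icc u v) :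
    deriv (smoothStep u v) t = 0 := by
  rw [mem_Icc, not_and_or, not_le, not_le] at ht
  have hconst : ∃ c, smoothStep u v =ᶠ[𝓝 t] fun _ => c := by
    rcases ht with ht | ht
    · exact ⟨0, (eventually_lt_nhds ht).mono fun x hx => smoothStep_of_le huv hx.le⟩
    · exact ⟨1, (eventually_gt_nhds ht).mono fun x hx => smoothStep_of_ge huv hx.le⟩
  obtain ⟨c, hc⟩ := hconst
  rw [hc.deriv_eq, deriv_const]

end SmoothStep

theorem exists_increasing_splice {I : Set ℝ} (hI : IsOpen I) {g l : ℝ → ℝ}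
    (hg : ContDiffOn ℝ ∞ g I) (hl : ContDiffOn ℝ ∞ l I) {u v : ℝ} (huv : u < v)
    (hle : ∀ t ∈ I, t ∈ Icc u v → g t ≤ l t) (hg' : ∀ t ∈ I, t ≤ v → 0 < deriv g t)
    (hl' : ∀ t ∈ I, u ≤ t → 0 < deriv l t) :
    ∃ H : ℝ → ℝ, ContDiffOn ℝ ∞ H I ∧ (∀ t ≤ u, H t = g t) ∧ (∀ t, v ≤ t → H t = l t) ∧
      ∀ t ∈ I, 0 < deriv H t := by
  refine ⟨fun t => g t + smoothStep u v t * (l t - g t),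
    hg.add ((contDiff_smoothStep u v).contDiffOn.mul (hl.sub hg)),
    fun t ht => by simp [smoothStep_of_le huv ht],
    fun t ht => by simp [smoothStep_of_ge huv ht], fun t ht => ?_⟩
  have hgt := ((hg.contDiffAt (hI.mem_nhds ht)).differentiableAt (by simp)).hasDerivAt
  have hlt := ((hl.contDiffAt (hI.mem_nhds ht)).differentiableAt (by simp)).hasDerivAt
  have hχt := ((contDiff_smoothStep u v).differentiable (by simp) t).hasDerivAt
  have hderiv : deriv (fun t => g t + smoothStep u v t * (l t - g t)) t =
      (1 - smoothStep u v t) * deriv g t + smoothStep u v t * deriv l t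
        + deriv (smoothStep u v) t * (l t - g t) := by
    refine (hgt.add (hχt.mul (hlt.sub hgt))).deriv.trans ?_
    rw [Pi.sub_apply]
    ring
  have hstep : 0 ≤ deriv (smoothStep u v) t * (l t - g t) := by
    by_cases hm : t ∈ Icc u v
    · exact mul_nonneg (deriv_smoothStep_nonneg huv) (sub_nonneg.2 (hle t ht hm))
    · rw [deriv_smoothStep_of_notMem huv hm, zero_mul]
  have hconvex : 0 < (1 - smoothStep u v t) * deriv g t + smoothStep u v t * deriv l t := by
    rcases le_total t u with htu | htu
    · simpa [smoothStep_of_le huv htu] using hg' t ht (htu.trans huv.le)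
    rcases le_total v t with htv | htv
    · simpa [smoothStep_of_ge huv htv] using hl' t ht htu
    have h0 : 0 ≤ smoothStep u v t := Real.smoothTransition.nonneg _
    have h1 : smoothStep u v t ≤ 1 := Real.smoothTransition.le_one _
    exact convex_Ioi (0 : ℝ) (hg' t ht htv) (hl' t ht htu) (sub_nonneg.2 h1) h0 (by ring)
  rw [hderiv]
  exact add_pos_of_pos_of_nonneg hconvex hstep

-- Both functions are spliced to a line of slope `Δ / 3` which keeps the middle third of the gap.
theorem exists_increasing_glue {g₀ g₁ : ℝ → ℝ} (h₀ : ContDiffOn ℝ ∞ g₀ (Icc 0 1))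
    (h₁ : ContDiffOn ℝ ∞ g₁ (Icc 0 1)) (hlt : g₀ 0 < g₁ 1)
    (hd₀ : ∀ᶠ t in 𝓝[>] (0 : ℝ), 0 < deriv g₀ t) (hd₁ : ∀ᶠ t in 𝓝[<] (1 : ℝ), 0 < deriv g₁ t) :
    ∃ H : ℝ → ℝ, ContDiffOn ℝ ∞ H (Ioo 0 1) ∧ (∀ᶠ t in 𝓝[>] (0 : ℝ), H t = g₀ t) ∧
      (∀ᶠ t in 𝓝[<] (1 : ℝ), H t = g₁ t) ∧ ∀ t ∈ Ioo (0 : ℝ) 1, 0 < deriv H t := by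
  let Δ := g₁ 1 - g₀ 0
  have : 0 < Δ := sub_pos.2 hlt
  let l : ℝ → ℝ := fun t => g₀ 0 + Δ / 3 + Δ / 3 * t
  have hl : ContDiffOn ℝ ∞ l (Ioo 0 1) := by fun_prop
  have hl' (t : ℝ) : deriv l t = Δ / 3 := by simp [l]
  have hbound₀ : ∀ᶠ t in 𝓝[>] (0 : ℝ), g₀ t < g₀ 0 + Δ / 3 :=
    ((h₀.continuousOn 0 (by simp)).mono_left nhdsGT_zero_le_nhdsWithin_Icc).eventually_lt_const
      (by linarith)
  have hbound₁ : ∀ᶠ t in 𝓝[<] (1 : ℝ), g₁ 1 - Δ / 3 < g₁ t :=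
    ((h₁.continuousOn 1 (by simp)).mono_left nhdsLT_one_le_nhdsWithin_Icc).eventually_const_lt
      (by linarith)
  obtain ⟨a, ⟨ha0, ha1⟩, ha⟩ := (mem_nhdsGT_iff_exists_mem_Ioc_Ioo_subset zero_lt_one).1
    (hd₀.and hbound₀)
  obtain ⟨b, ⟨hb0, hb1⟩, hb⟩ := (mem_nhdsLT_iff_exists_mem_Ico_Ioo_subset
    (show a / 2 < 1 by linarith)).1 (hd₁.and hbound₁)
  obtain ⟨H, hH, hHg, hHl, hH'⟩ := exists_increasing_splice isOpen_Ioo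
    (h₀.mono Ioo_subset_Icc_self) hl (u := a / 4) (v := a / 2) (by linarith)
    (fun t ht htv => by
      have := (ha ⟨ht.1, by linarith [htv.2]⟩).2
      have := mul_pos (show 0 < Δ / 3 by linarith) ht.1
      simp only [l]
      linarith)
    (fun t ht htv => (ha ⟨ht.1, by linarith⟩).1)
    (fun t _ _ => by rw [hl']; linarith)
  obtain ⟨K, hK, hKH, hKg, hK'⟩ := exists_increasing_splice isOpen_Ioo hH
    (h₁.mono Ioo_subset_Icc_self) (u := (2 * b + 1) / 3) (v := (b + 2) / 3) (by linarith)
    (fun t ht htv => by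
      rw [hHl t (by linarith [htv.1])]
      have := (hb ⟨by linarith [htv.1], ht.2⟩).2
      have := mul_lt_mul_of_pos_left ht.2 (show 0 < Δ / 3 by linarith)
      simp only [l]
      linarith)
    (fun t ht _ => hH' t ht)
    (fun t ht htu => (hb ⟨by linarith, ht.2⟩).1)
  refine ⟨K, hK, ?_, ?_, hK'⟩
  · filter_upwards [Ioo_mem_nhdsGT (show 0 < a / 4 by linarith)] with t ht
    rw [hKH t (by linarith [ht.2]), hHg t ht.2.le]
  · filter_upwards [Ioo_mem_nhdsLT (show (b + 2) / 3 < 1 by linarith)] with t ht using hKg t ht.1.le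

theorem exists_monotone_glue {g₀ g₁ : ℝ → ℝ} {σ : ℝ} (hσ : σ = 1 ∨ σ = -1)
    (h₀ : ContDiffOn ℝ ∞ g₀ (Icc 0 1)) (h₁ : ContDiffOn ℝ ∞ g₁ (Icc 0 1))
    (hlt : 0 < σ * (g₁ 1 - g₀ 0)) (hd₀ : ∀ᶠ t in 𝓝[>] (0 : ℝ), 0 < σ * deriv g₀ t)
    (hd₁ : ∀ᶠ t in 𝓝[<] (1 : ℝ), 0 < σ * deriv g₁ t) :
    ∃ H : ℝ → ℝ, ContDiffOn ℝ ∞ H (Ioo 0 1) ∧ (∀ᶠ t in 𝓝[>] (0 : ℝ), H t = g₀ t) ∧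
      (∀ᶠ t in 𝓝[<] (1 : ℝ), H t = g₁ t) ∧ ∀ t ∈ Ioo (0 : ℝ) 1, 0 < σ * deriv H t := by
  rcases hσ with rfl | rfl
  · simp only [one_mul] at *
    exact exists_increasing_glue h₀ h₁ (by linarith) hd₀ hd₁
  · simp only [neg_one_mul, ← deriv.neg] at *
    obtain ⟨H, hH, hH₀, hH₁, hH'⟩ := exists_increasing_glue h₀.neg h₁.neg (by linarith) hd₀ hd₁
    exact ⟨-H, hH.neg, hH₀.mono fun t ht => by simp [ht], hH₁.mono fun t ht => by simp [ht],
      fun t ht => by simpa using hH' t ht⟩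

/-! ### Quadratic functions in tangent coordinates -/

section Frame

variable (o : OrthonormalBasis (Fin 3) ℝ E3)

theorem exists_orthonormalBasis_zero_eq {p : E3} (hp : ‖p‖ = 1) :
    ∃ o : OrthonormalBasis (Fin 3) ℝ E3, o 0 = p := by
  have horth : Orthonormal ℝ (({0} : Set (Fin 3)).domRestrict fun _ => p) :=
    ⟨fun _ => hp, fun i j hij => absurd (Subsingleton.elim i j) hij⟩
  obtain ⟨o, ho⟩ := horth.exists_orthonormalBasis_extension_of_card_eq (by simp)
  exact ⟨o, ho 0 rfl⟩

/-- The coordinates of a vector with respect to the basis `o 1`, `o 2` of the tangent plane of the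
sphere at `o 0`. -/
noncomputable def frameCoord : E3 →L[ℝ] ℝ × ℝ := (innerSL ℝ (o 1)).prod (innerSL ℝ (o 2))

/-- The tangent vector at `o 0` with given coordinates with respect to `o 1`, `o 2`. -/
noncomputable def frameLift : ℝ × ℝ →ₗ[ℝ] E3 :=
  (LinearMap.toSpanSingleton ℝ E3 (o 1)).coprod (LinearMap.toSpanSingleton ℝ E3 (o 2))

theorem frameCoord_apply (x : E3) : frameCoord o x = (inner ℝ (o 1) x, inner ℝ (o 2) x) := rfl

theorem frameLift_apply (w : ℝ × ℝ) : frameLift o w = w.1 • o 1 + w.2 • o 2 := rfl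

theorem frameCoord_zero_vector : frameCoord o (o 0) = 0 := by
  simp [frameCoord_apply, o.inner_eq_ite]

theorem inner_frameLift (w : ℝ × ℝ) : inner ℝ (o 0) (frameLift o w) = 0 := by
  simp [frameLift_apply, inner_add_right, inner_smul_right, o.inner_eq_ite]

theorem frameCoord_frameLift (w : ℝ × ℝ) : frameCoord o (frameLift o w) = w := by
  simp [frameCoord_apply, frameLift_apply, inner_add_right, inner_smul_right, o.inner_eq_ite]

variable {o} {u v : E3}

theorem frameLift_frameCoord (hu : inner ℝ (o 0) u = 0) : frameLift o (frameCoord o u) = u := by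
  have h := o.sum_repr' u
  rwa [Fin.sum_univ_three, hu, zero_smul, zero_add] at h

theorem planeDot_frameCoord (hu : inner ℝ (o 0) u = 0) :
    planeDot (frameCoord o u) (frameCoord o v) = inner ℝ u v := by
  rw [← o.sum_inner_mul_inner u v, Fin.sum_univ_three, real_inner_comm, hu, zero_mul, zero_add,
    real_inner_comm, real_inner_comm (o 2)]
  rfl

theorem frameCoord_ne_zero (hu : inner ℝ (o 0) u = 0) (h : u ≠ 0) : frameCoord o u ≠ 0 :=
  fun h0 => h (by rw [← frameLift_frameCoord hu, h0, map_zero])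

theorem sameRay_frameCoord_iff (hu : inner ℝ (o 0) u = 0) (hv : inner ℝ (o 0) v = 0) :
    SameRay ℝ (frameCoord o u) (frameCoord o v) ↔ SameRay ℝ u v := by
  refine ⟨fun h => ?_, fun h => h.map (frameCoord o).toLinearMap⟩
  simpa only [frameLift_frameCoord hu, frameLift_frameCoord hv] using h.map (frameLift o)

theorem planeOpposite_frameCoord_iff (hu : inner ℝ (o 0) u = 0) (hv : inner ℝ (o 0) v = 0)
    (hu0 : u ≠ 0) (hv0 : v ≠ 0) :
    PlaneOpposite (frameCoord o u) (frameCoord o v) ↔ SameRay ℝ v (-u) := by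
  rw [planeOpposite_iff_sameRay_neg (frameCoord_ne_zero hu hu0) (frameCoord_ne_zero hv hv0),
    ← map_neg, sameRay_frameCoord_iff hv (by rw [inner_neg_right, hu, neg_zero])]

variable (o) (w : ℝ × ℝ) (c : ℝ × ℝ × ℝ)

/-- A quadratic function on `E3` which depends only on the tangent coordinates at `o 0`. -/
noncomputable def frameQuadratic (x : E3) : ℝ :=
  planeDot w (frameCoord o x) + planeForm c (frameCoord o x)

theorem contDiff_frameQuadratic {n : WithTop ℕ∞} : ContDiff ℝ n (frameQuadratic o w c) := by
  have h := (frameCoord o).contDiff (n := n)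
  unfold frameQuadratic planeDot planeForm
  fun_prop

theorem fderiv_frameQuadratic (x v : E3) : fderiv ℝ (frameQuadratic o w c) x v =
    planeDot (w + (2 : ℝ) • planeSymm c (frameCoord o x)) (frameCoord o v) := by
  have h₁ : HasFDerivAt (fun x : E3 => inner ℝ (o 1) x) (innerSL ℝ (o 1)) x :=
    (innerSL ℝ (o 1)).hasFDerivAt
  have h₂ : HasFDerivAt (fun x : E3 => inner ℝ (o 2) x) (innerSL ℝ (o 2)) x :=
    (innerSL ℝ (o 2)).hasFDerivAt
  have h := ((h₁.const_mul w.1).add (h₂.const_mul w.2)).add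
    ((((h₁.pow 2).const_mul c.1).add ((h₁.const_mul (2 * c.2.1)).mul h₂)).add
      ((h₂.pow 2).const_mul c.2.2))
  rw [HasFDerivAt.fderiv (f := frameQuadratic o w c) h]
  simp [planeDot, planeSymm, frameCoord_apply]
  ring

theorem fderiv_fderiv_frameQuadratic (x u v : E3) :
    fderiv ℝ (fderiv ℝ (frameQuadratic o w c)) x u v =
      2 * planeDot (planeSymm c (frameCoord o u)) (frameCoord o v) := by
  have hdiff : DifferentiableAt ℝ (fderiv ℝ (frameQuadratic o w c)) x :=
    ((contDiff_frameQuadratic o w c (n := 2)).fderiv_right (m := 1) le_rfl).differentiable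
      one_ne_zero x
  have heval : fderiv ℝ (fun y => fderiv ℝ (frameQuadratic o w c) y v) x u =
      fderiv ℝ (fderiv ℝ (frameQuadratic o w c)) x u v := by
    rw [fderiv_clm_apply hdiff (differentiableAt_const v)]
    simp
  rw [← heval]
  simp only [fderiv_frameQuadratic, planeDot_add_left, planeDot_smul_left]
  have h₁ : HasFDerivAt (fun x : E3 => inner ℝ (o 1) x) (innerSL ℝ (o 1)) x :=
    (innerSL ℝ (o 1)).hasFDerivAt
  have h₂ : HasFDerivAt (fun x : E3 => inner ℝ (o 2) x) (innerSL ℝ (o 2)) x :=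
    (innerSL ℝ (o 2)).hasFDerivAt
  have h := (((((h₁.const_mul c.1).add (h₂.const_mul c.2.1)).mul_const (frameCoord o v).1).add
    (((h₁.const_mul c.2.1).add (h₂.const_mul c.2.2)).mul_const (frameCoord o v).2)).const_mul
      2).const_add (planeDot w (frameCoord o v))
  refine (DFunLike.congr_fun h.fderiv u).trans ?_
  simp [planeDot, planeSymm, frameCoord_apply]
  ring

theorem frameQuadratic_zero_vector : frameQuadratic o w c (o 0) = 0 := by
  simp [frameQuadratic, frameCoord_zero_vector, planeDot, planeForm]

theorem fderiv_frameQuadratic_zero_vector (v : E3) :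
    fderiv ℝ (frameQuadratic o w c) (o 0) v = planeDot w (frameCoord o v) := by
  rw [fderiv_frameQuadratic, frameCoord_zero_vector, planeSymm_zero, smul_zero, add_zero]

theorem isSphereCritical_frameQuadratic_iff :
    IsSphereCritical (frameQuadratic o w c) (o 0) ↔ w = 0 := by
  refine ⟨fun h => ?_, ?_⟩
  · by_contra hw
    have h0 := h (frameLift o w) (inner_frameLift o w)
    rw [fderiv_frameQuadratic_zero_vector, frameCoord_frameLift] at h0
    exact (planeDot_self_pos hw).ne' h0
  · rintro rfl v -
    rw [fderiv_frameQuadratic_zero_vector, planeDot_zero_left]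

variable {c}

theorem isSphereNondegenerate_frameQuadratic (hc : c.1 * c.2.2 - c.2.1 ^ 2 ≠ 0) :
    IsSphereNondegenerate (frameQuadratic o w c) (o 0) := by
  intro u hu hu0
  set z := planeSymm c (frameCoord o u) with hz
  refine ⟨frameLift o z, inner_frameLift o z, ?_⟩
  rw [fderiv_fderiv_frameQuadratic, fderiv_frameQuadratic_zero_vector, frameCoord_zero_vector,
    frameCoord_frameLift, ← hz, planeDot_comm 0 w, planeDot_zero_left, zero_mul, sub_zero]
  exact (mul_pos two_pos
    (planeDot_self_pos (planeSymm_ne_zero hc (frameCoord_ne_zero hu hu0)))).ne'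

variable {w}

theorem IsSphereCritical.isSphereNondegenerate_frameQuadratic
    (hwc : w ≠ 0 ∨ c.1 * c.2.2 - c.2.1 ^ 2 ≠ 0)
    (h : IsSphereCritical (frameQuadratic o w c) (o 0)) :
    IsSphereNondegenerate (frameQuadratic o w c) (o 0) :=
  _root_.isSphereNondegenerate_frameQuadratic o w
    (hwc.resolve_left (not_not.2 ((isSphereCritical_frameQuadratic_iff o w c).1 h)))

theorem eventually_notMem_sphereCriticalSet_frameQuadratic
    (hwc : w ≠ 0 ∨ c.1 * c.2.2 - c.2.1 ^ 2 ≠ 0) :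
    ∀ᶠ y in 𝓝[≠] (o 0), y ∉ sphereCriticalSet (frameQuadratic o w c) := by
  have hsmooth := (contDiff_frameQuadratic o w c (n := 2)).fderiv_right (m := 1) le_rfl
  by_cases h : IsSphereCritical (frameQuadratic o w c) (o 0)
  · exact (h.isSphereNondegenerate_frameQuadratic o hwc).eventually_not_isSphereCritical
      (hsmooth.differentiable one_ne_zero _)
  · exact nhdsWithin_le_nhds ((isClosed_sphereCriticalSet hsmooth.continuous).isOpen_compl.mem_nhds
      fun hmem => h hmem.2)

end Frame

section PathDerivative

variable {X : Type*} [NormedAddCommGroup X] [NormedSpace ℝ X] {F : X → ℝ} {η : ℝ → X} {s : Set ℝ}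
  {t : ℝ}

theorem derivWithin_comp_eq_fderiv_apply (hF : DifferentiableAt ℝ F (η t))
    (hη : DifferentiableWithinAt ℝ η s t) :
    derivWithin (F ∘ η) s t = fderiv ℝ F (η t) (derivWithin η s t) := by
  simpa only [fderivWithin_univ] using
    fderivWithin_comp_derivWithin t hF.differentiableWithinAt hη (mapsTo_univ η s)

theorem derivWithin_derivWithin_comp (hF : ContDiff ℝ 2 F) (hη : ContDiffOn ℝ 2 η s)
    (hs : UniqueDiffOn ℝ s) (ht : t ∈ s) :
    derivWithin (derivWithin (F ∘ η) s) s t =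
      fderiv ℝ (fderiv ℝ F) (η t) (derivWithin η s t) (derivWithin η s t) +
        fderiv ℝ F (η t) (derivWithin (derivWithin η s) s t) := by
  have hfirst : ∀ r ∈ s, derivWithin (F ∘ η) s r = fderiv ℝ F (η r) (derivWithin η s r) :=
    fun r hr => derivWithin_comp_eq_fderiv_apply (hF.differentiable two_ne_zero _)
      (hη.differentiableOn two_ne_zero r hr)
  have hF' : Differentiable ℝ (fderiv ℝ F) :=
    (hF.fderiv_right (m := 1) le_rfl).differentiable one_ne_zero
  have hη' : DifferentiableWithinAt ℝ (derivWithin η s) s t :=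
    (hη.derivWithin hs (m := 1) le_rfl).differentiableOn one_ne_zero t ht
  have hchain := (hF' (η t)).hasFDerivAt.comp_hasDerivWithinAt t
    (hη.differentiableOn two_ne_zero t ht).hasDerivWithinAt
  rw [derivWithin_congr hfirst (hfirst t ht)]
  exact (hchain.clm_apply hη'.hasDerivWithinAt).derivWithin (hs t ht)

end PathDerivative

/-! ### Edge-ends -/

/-- A path parametrised by `[0, 1]`, traversed from its first point (`false`) or backwards from
its last point (`true`), as a path in the ambient space. -/
def endPath (γ : ℝ → S2) : Bool → ℝ → E3
  | false => fun t => γ t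
  | true => fun t => γ (1 - t)

section EndPath

variable {γ : ℝ → S2}

theorem mapsTo_one_sub_Icc : MapsTo (fun t : ℝ => 1 - t) (Icc 0 1) (Icc 0 1) := fun _ ht =>
  ⟨sub_nonneg.2 ht.2, sub_le_self 1 ht.1⟩

theorem endPath_zero (b : Bool) : endPath γ b 0 = pathEnd γ b := by
  cases b <;> simp [endPath, pathEnd]

theorem inner_endPath_self (b : Bool) (t : ℝ) : inner ℝ (endPath γ b t) (endPath γ b t) = 1 := by
  rw [real_inner_self_eq_norm_sq]
  cases b <;> simp [endPath]

theorem contDiffOn_endPath {n : WithTop ℕ∞} (hγ : ContDiffOn ℝ n (fun t => (γ t : E3)) (Icc 0 1))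
    (b : Bool) : ContDiffOn ℝ n (endPath γ b) (Icc 0 1) := by
  cases b
  · exact hγ
  · exact hγ.comp (contDiff_const.sub contDiff_id).contDiffOn mapsTo_one_sub_Icc

theorem hasDerivWithinAt_endPath (hγ : DifferentiableOn ℝ (fun t => (γ t : E3)) (Icc 0 1))
    (b : Bool) : HasDerivWithinAt (endPath γ b) (pathEndDir γ b) (Icc 0 1) 0 := by
  cases b
  · exact (hγ 0 (by simp)).hasDerivWithinAt
  · have hend : HasDerivWithinAt (fun t => (γ t : E3)) (pathVelocity γ 1) (Icc 0 1) (1 - 0) := by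
      rw [sub_zero]
      exact (hγ 1 (by simp)).hasDerivWithinAt
    have hrev : HasDerivWithinAt (fun t : ℝ => 1 - t) (-1) (Icc 0 1) 0 :=
      ((hasDerivAt_id (0 : ℝ)).const_sub 1).hasDerivWithinAt
    have hcomp := hend.scomp 0 hrev mapsTo_one_sub_Icc
    rwa [neg_one_smul] at hcomp

theorem derivWithin_endPath (hγ : DifferentiableOn ℝ (fun t => (γ t : E3)) (Icc 0 1)) (b : Bool) :
    derivWithin (endPath γ b) (Icc 0 1) 0 = pathEndDir γ b :=
  (hasDerivWithinAt_endPath hγ b).derivWithin (uniqueDiffOn_Icc zero_lt_one 0 (by simp))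

theorem inner_pathEnd_pathEndDir (hγ : DifferentiableOn ℝ (fun t => (γ t : E3)) (Icc 0 1))
    (b : Bool) : inner ℝ (pathEnd γ b : E3) (pathEndDir γ b) = 0 := by
  have hd := hasDerivWithinAt_endPath hγ b
  have hsq := (hd.inner ℝ hd).derivWithin (uniqueDiffOn_Icc zero_lt_one 0 (by simp))
  rw [funext (inner_endPath_self (γ := γ) b), derivWithin_fun_const, Pi.zero_apply, endPath_zero,
    real_inner_comm] at hsq
  rw [real_inner_comm]
  linarith

theorem pathEndDir_ne_zero (h : ∀ t ∈ Icc (0 : ℝ) 1, pathVelocity γ t ≠ 0) (b : Bool) :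
    pathEndDir γ b ≠ 0 := by
  cases b
  · exact h 0 (by simp)
  · exact neg_ne_zero.2 (h 1 (by simp))

end EndPath

namespace SmoothEmbedding

variable {V E : Type*} {G : Multigraph V E} (Γ : SmoothEmbedding G)

/-- The edge-ends at a vertex: an edge together with the choice of its first (`false`) or last
(`true`) point. -/
def EdgeEnd (v : V) : Type _ := {x : E × Bool // pathEnd (Γ.arc x.1) x.2 = Γ.vert v}

theorem exists_pathEnd_eq_iff (e : E) (v : V) :
    (∃ b, pathEnd (Γ.arc e) b = Γ.vert v) ↔ v ∈ G.ends e := by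
  obtain ⟨x, y, hxy, hx, hy⟩ := Γ.arc_ends e
  rw [hxy, Sym2.mem_iff, Bool.exists_bool]
  simp only [pathEnd, hx, hy, Γ.vert_injective.eq_iff, eq_comm]

theorem pathEnd_injective (hloop : G.Loopless) (e : E) :
    Function.Injective (pathEnd (Γ.arc e)) := by
  obtain ⟨x, y, hxy, hx, hy⟩ := Γ.arc_ends e
  have hne : pathEnd (Γ.arc e) false ≠ pathEnd (Γ.arc e) true := fun h =>
    hloop e (hxy ▸ Sym2.mk_isDiag_iff.2 (Γ.vert_injective (hx.symm.trans (h.trans hy))))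
  rintro (_ | _) (_ | _) h
  exacts [rfl, absurd h hne, absurd h.symm hne, rfl]

theorem natCard_edgeEnd (hloop : G.Loopless) (v : V) : Nat.card (Γ.EdgeEnd v) = G.degree v := by
  have hnoloop : {e | G.ends e = s(v, v)} = ∅ :=
    eq_empty_of_forall_notMem fun e he => hloop e (he ▸ Sym2.mk_isDiag_iff.2 rfl)
  rw [Multigraph.degree, hnoloop, ncard_empty, add_zero, ← Nat.card_coe_set_eq]
  refine Nat.card_congr (Equiv.ofBijective
    (fun x : Γ.EdgeEnd v => ⟨x.1.1, (Γ.exists_pathEnd_eq_iff _ v).1 ⟨x.1.2, x.2⟩⟩) ⟨?_, ?_⟩)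
  · rintro ⟨⟨e, b⟩, hb⟩ ⟨⟨e', b'⟩, hb'⟩ h
    obtain rfl : e = e' := congrArg Subtype.val h
    obtain rfl : b = b' := Γ.pathEnd_injective hloop e (hb.trans hb'.symm)
    rfl
  · rintro ⟨e, he⟩
    obtain ⟨b, hb⟩ := (Γ.exists_pathEnd_eq_iff e v).2 he
    exact ⟨⟨(e, b), hb⟩, rfl⟩

variable {Γ} {v : V}

/-- The tangent vector with which an edge-end leaves its vertex. -/
noncomputable def EdgeEnd.dir (i : Γ.EdgeEnd v) : E3 := pathEndDir (Γ.arc i.1.1) i.1.2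

/-- The path which starts at the vertex of an edge-end and runs along the edge. -/
def EdgeEnd.path (i : Γ.EdgeEnd v) : ℝ → E3 := endPath (Γ.arc i.1.1) i.1.2

theorem mem_endDirs_iff {d : E3} :
    d ∈ endDirs Γ.arc (Γ.vert v) ↔ ∃ i : Γ.EdgeEnd v, i.dir = d :=
  ⟨fun ⟨e, b, h, hd⟩ => ⟨⟨(e, b), h⟩, hd⟩, fun ⟨i, hd⟩ => ⟨i.1.1, i.1.2, i.2, hd⟩⟩

theorem EdgeEnd.dir_mem_endDirs (i : Γ.EdgeEnd v) : i.dir ∈ endDirs Γ.arc (Γ.vert v) :=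
  mem_endDirs_iff.2 ⟨i, rfl⟩

theorem EdgeEnd.inner_dir (i : Γ.EdgeEnd v) : inner ℝ (Γ.vert v : E3) i.dir = 0 := by
  rw [← i.2]
  exact inner_pathEnd_pathEndDir ((Γ.arc_smooth i.1.1).differentiableOn (by simp)) i.1.2

theorem EdgeEnd.dir_ne_zero (i : Γ.EdgeEnd v) : i.dir ≠ 0 :=
  pathEndDir_ne_zero (Γ.arc_regular i.1.1) i.1.2

theorem EdgeEnd.path_zero (i : Γ.EdgeEnd v) : i.path 0 = Γ.vert v := by
  rw [← i.2]
  exact endPath_zero i.1.2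

theorem EdgeEnd.contDiffOn_path (i : Γ.EdgeEnd v) : ContDiffOn ℝ ∞ i.path (Icc 0 1) :=
  contDiffOn_endPath (Γ.arc_smooth i.1.1) i.1.2

theorem EdgeEnd.derivWithin_path (i : Γ.EdgeEnd v) : derivWithin i.path (Icc 0 1) 0 = i.dir :=
  derivWithin_endPath ((Γ.arc_smooth i.1.1).differentiableOn (by simp)) i.1.2

section VertexModel

variable {o : OrthonormalBasis (Fin 3) ℝ E3}

theorem frameCoord_dir_ne_zero (ho : o 0 = Γ.vert v) (i : Γ.EdgeEnd v) : frameCoord o i.dir ≠ 0 :=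
  frameCoord_ne_zero (ho ▸ i.inner_dir) i.dir_ne_zero

theorem planeDistinct_frameCoord_dir (ho : o 0 = Γ.vert v) :
    PlaneDistinct fun i : Γ.EdgeEnd v => frameCoord o i.dir := by
  intro i j hij
  by_contra! h
  exact Γ.dir_distinct i.1.1 i.1.2 j.1.1 j.1.2 (fun h => hij (Subtype.ext h)) (i.2.trans j.2.symm)
    ((sameRay_frameCoord_iff (ho ▸ i.inner_dir) (ho ▸ j.inner_dir)).1
      (sameRay_of_planeDet_eq_zero h.1 h.2))

theorem planeBalanced_frameCoord_dir (ho : o 0 = Γ.vert v) (hv : G.degree v = 4) :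
    PlaneBalanced fun i : Γ.EdgeEnd v => frameCoord o i.dir := by
  intro w hw
  have hne : frameLift o w ≠ 0 := fun h0 => hw (by rw [← frameCoord_frameLift o w, h0, map_zero])
  obtain ⟨d, hd, hneg⟩ := Γ.dir_balanced v hv (frameLift o w) (ho ▸ inner_frameLift o w) hne
  obtain ⟨i, rfl⟩ := mem_endDirs_iff.1 hd
  refine ⟨i, ?_⟩
  rwa [← planeDot_frameCoord (inner_frameLift o w), frameCoord_frameLift] at hneg

theorem planePaired_frameCoord_dir (ho : o 0 = Γ.vert v) (hv : G.degree v = 4) :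
    PlanePaired fun i : Γ.EdgeEnd v => frameCoord o i.dir := by
  have hopp : ∀ i j : Γ.EdgeEnd v,
      PlaneOpposite (frameCoord o i.dir) (frameCoord o j.dir) ↔ SameRay ℝ j.dir (-i.dir) :=
    fun i j => planeOpposite_frameCoord_iff (ho ▸ i.inner_dir) (ho ▸ j.inner_dir) i.dir_ne_zero
      j.dir_ne_zero
  rintro ⟨i, j, hij⟩ l
  obtain ⟨d, hd, hray⟩ := Γ.dir_opposite v hv
    ⟨i.dir, i.dir_mem_endDirs, j.dir, j.dir_mem_endDirs, (hopp i j).1 hij⟩ l.dir l.dir_mem_endDirs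
  obtain ⟨m, rfl⟩ := mem_endDirs_iff.1 hd
  exact ⟨m, (hopp l m).2 hray⟩

theorem derivWithin_frameQuadratic_path (ho : o 0 = Γ.vert v) (i : Γ.EdgeEnd v)
    (w : ℝ × ℝ) (c : ℝ × ℝ × ℝ) :
    derivWithin (frameQuadratic o w c ∘ i.path) (Icc 0 1) 0 =
      planeDot w (frameCoord o i.dir) := by
  rw [derivWithin_comp_eq_fderiv_apply
    ((contDiff_frameQuadratic o w c).differentiable one_ne_zero _)
    (i.contDiffOn_path.differentiableOn (by simp) 0 (by simp)), i.derivWithin_path, i.path_zero,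
    ← ho, fderiv_frameQuadratic_zero_vector]

theorem derivWithin_derivWithin_frameQuadratic_path (ho : o 0 = Γ.vert v) (i : Γ.EdgeEnd v)
    (w : ℝ × ℝ) (c : ℝ × ℝ × ℝ) :
    derivWithin (derivWithin (frameQuadratic o w c ∘ i.path) (Icc 0 1)) (Icc 0 1) 0 =
      planeDot w (frameCoord o (derivWithin (derivWithin i.path (Icc 0 1)) (Icc 0 1) 0)) +
        2 * planeForm c (frameCoord o i.dir) := by
  rw [derivWithin_derivWithin_comp (contDiff_frameQuadratic o w c)
    (contDiffOn_infty.1 i.contDiffOn_path 2) (uniqueDiffOn_Icc zero_lt_one) (by simp),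
    i.derivWithin_path, i.path_zero, ← ho, fderiv_frameQuadratic_zero_vector,
    fderiv_fderiv_frameQuadratic, planeDot_planeSymm_self, add_comm]

end VertexModel

theorem exists_vertexModel [Finite E] (hloop : G.Loopless) (hdeg : G.degree v ≤ 4)
    {s : Γ.EdgeEnd v → ℝ} (hs : ∀ i, s i = 1 ∨ s i = -1) :
    ∃ q : E3 → ℝ, ContDiff ℝ ∞ q ∧ q (Γ.vert v) = 0 ∧
      (∀ᶠ y in 𝓝[≠] (Γ.vert v : E3), y ∉ sphereCriticalSet q) ∧
      (IsSphereCritical q (Γ.vert v) → IsSphereNondegenerate q (Γ.vert v)) ∧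
      ∀ i, ∀ᶠ t in 𝓝[>] (0 : ℝ), 0 < s i * deriv (q ∘ i.path) t := by
  obtain ⟨o, ho⟩ := exists_orthonormalBasis_zero_eq (p := Γ.vert v) (by simp)
  have : Finite (Γ.EdgeEnd v) := Subtype.finite
  have := Fintype.ofFinite (Γ.EdgeEnd v)
  have hcard : Fintype.card (Γ.EdgeEnd v) = G.degree v := by
    rw [← Nat.card_eq_fintype_card, Γ.natCard_edgeEnd hloop]
  obtain ⟨w, c, hsign, hwc⟩ := exists_isPlaneModel (frameCoord_dir_ne_zero ho)
    (planeDistinct_frameCoord_dir ho) (hcard.trans_le hdeg)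
    (fun h => planeBalanced_frameCoord_dir ho (hcard.symm.trans h))
    (fun h => planePaired_frameCoord_dir ho (hcard.symm.trans h)) hs
    fun i => frameCoord o (derivWithin (derivWithin i.path (Icc 0 1)) (Icc 0 1) 0)
  refine ⟨frameQuadratic o w c, contDiff_frameQuadratic o w c,
    ho ▸ frameQuadratic_zero_vector o w c,
    ho ▸ eventually_notMem_sphereCriticalSet_frameQuadratic o hwc,
    ho ▸ IsSphereCritical.isSphereNondegenerate_frameQuadratic o hwc, fun i => ?_⟩
  apply eventually_deriv_pos_of_second_order
  · exact (contDiff_frameQuadratic o w c).comp_contDiffOn (contDiffOn_infty.1 i.contDiffOn_path 2)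
  · rw [derivWithin_frameQuadratic_path ho, derivWithin_derivWithin_frameQuadratic_path ho]
    exact hsign i

end SmoothEmbedding

/-! ### Extension of functions from an embedded graph -/

section LocalExtension

variable {n : WithTop ℕ∞} {s : Set ℝ} {t₀ : ℝ}

theorem exists_contDiffOn_leftInverse_of_deriv_ne_zero (hn : n ≠ 0) {l : ℝ → ℝ} (hs : IsOpen s)
    (hl : ContDiffOn ℝ n l s) (ht₀ : t₀ ∈ s) (hreg : deriv l t₀ ≠ 0) :
    ∃ U ∈ 𝓝 (l t₀), ∃ ρ : ℝ → ℝ, ContDiffOn ℝ n ρ U ∧ MapsTo ρ U s ∧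
      ∀ᶠ t in 𝓝 t₀, ρ (l t) = t := by
  have hl' : ∀ t ∈ s, ContDiffAt ℝ n l t := fun t ht => hl.contDiffAt (hs.mem_nhds ht)
  have hder : ∀ t ∈ s, HasDerivAt l (deriv l t) t := fun t ht =>
    ((hl' t ht).differentiableAt hn).hasDerivAt
  let φ := (hl' t₀ ht₀).toOpenPartialHomeomorph l ((hder t₀ ht₀).hasFDerivAt_equiv hreg) hn
  have hsrc : t₀ ∈ φ.source := (hl' t₀ ht₀).mem_toOpenPartialHomeomorph_source _ hn
  have htgt : l t₀ ∈ φ.target := φ.map_source hsrc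
  have hregular : ∀ᶠ t in 𝓝 t₀, t ∈ s ∧ deriv l t ≠ 0 :=
    (hs.eventually_mem ht₀).and (((hl.continuousOn_deriv_of_isOpen hs
      (ENat.one_le_iff_ne_zero_withTop.2 hn)).continuousAt (hs.mem_nhds ht₀)).eventually_ne hreg)
  have hregular_symm : ∀ᶠ y in 𝓝 (l t₀), y ∈ φ.target ∧ φ.symm y ∈ s ∧ deriv l (φ.symm y) ≠ 0 := by
    rw [← show φ.symm (l t₀) = t₀ from φ.left_inv hsrc] at hregular
    exact (φ.open_target.eventually_mem htgt).and ((φ.continuousAt_symm htgt).eventually hregular)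
  refine ⟨_, hregular_symm, φ.symm, ?_, fun y hy => hy.2.1, ?_⟩
  · rintro y ⟨hytgt, hys, hyreg⟩
    exact (φ.contDiffAt_symm_deriv hyreg hytgt (hder _ hys) (hl' _ hys)).contDiffWithinAt
  · filter_upwards [φ.open_source.mem_nhds hsrc] with t ht using φ.left_inv ht

theorem exists_contDiffOn_comp_eventuallyEq {X : Type*} [NormedAddCommGroup X]
    [InnerProductSpace ℝ X] (hn : n ≠ 0) {γ : ℝ → X} {h : ℝ → ℝ} (hs : IsOpen s)
    (hγ : ContDiffOn ℝ n γ s) (hh : ContDiffOn ℝ n h s) (ht₀ : t₀ ∈ s) (hreg : deriv γ t₀ ≠ 0) :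
    ∃ U ∈ 𝓝 (γ t₀), ∃ g : X → ℝ, ContDiffOn ℝ n g U ∧ ∀ᶠ t in 𝓝 t₀, g (γ t) = h t := by
  let L : X →L[ℝ] ℝ := innerSL ℝ (deriv γ t₀)
  have hderiv : HasDerivAt (L ∘ γ) (inner ℝ (deriv γ t₀) (deriv γ t₀)) t₀ :=
    L.hasFDerivAt.comp_hasDerivAt t₀
      ((hγ.contDiffAt (hs.mem_nhds ht₀)).differentiableAt hn).hasDerivAt
  obtain ⟨U, hU, ρ, hρ, hρs, hleft⟩ := exists_contDiffOn_leftInverse_of_deriv_ne_zero hn hs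
    (L.contDiff.comp_contDiffOn hγ) ht₀ (hderiv.deriv ▸ (real_inner_self_pos.2 hreg).ne')
  refine ⟨L ⁻¹' U, L.continuous.continuousAt hU, h ∘ ρ ∘ L,
    hh.comp (hρ.comp L.contDiff.contDiffOn fun _ hx => hx) fun _ hx => hρs hx, ?_⟩
  filter_upwards [hleft] with t ht using congrArg h ht

end LocalExtension

theorem exists_isClosed_nhds_pairwise_disjoint {ι X : Type*} [Finite ι] [TopologicalSpace X]
    [T3Space X] {p : ι → X} (hp : Function.Injective p) {W : ι → Set X} (hW : ∀ i, W i ∈ 𝓝 (p i)) :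
    ∃ C : ι → Set X, (∀ i, IsClosed (C i) ∧ C i ∈ 𝓝 (p i) ∧ C i ⊆ W i) ∧
      Pairwise (Function.onFun Disjoint C) := by
  obtain ⟨U, hU, hdisj⟩ := (finite_range p).t2_separation
  have hC : ∀ i, ∃ C ∈ 𝓝 (p i), IsClosed C ∧ C ⊆ W i ∩ U (p i) := fun i =>
    exists_mem_nhds_isClosed_subset (inter_mem (hW i) ((hU (p i)).2.mem_nhds (hU (p i)).1))
  choose C hnhds hclosed hsub using hC
  exact ⟨C, fun i => ⟨hclosed i, hnhds i, (hsub i).trans inter_subset_left⟩, fun i j hij =>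
    (hdisj (mem_range_self i) (mem_range_self j) (hp.ne hij)).mono
      ((hsub i).trans inter_subset_right) ((hsub j).trans inter_subset_right)⟩

namespace SmoothEmbedding

variable {V E : Type*} {G : Multigraph V E} (Γ : SmoothEmbedding G)

theorem eq_zero_or_one_or_mem_Ioo {t : ℝ} (ht : t ∈ Icc (0 : ℝ) 1) :
    t = 0 ∨ t = 1 ∨ t ∈ Ioo (0 : ℝ) 1 := by
  rcases ht.1.eq_or_lt with h | h
  · exact Or.inl h.symm
  · exact Or.inr (ht.2.eq_or_lt.imp_right fun h' => ⟨h, h'⟩)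

theorem exists_vert_eq_or_mem_Ioo (e : E) {t : ℝ} (ht : t ∈ Icc (0 : ℝ) 1) :
    (∃ v, Γ.arc e t = Γ.vert v) ∨ t ∈ Ioo (0 : ℝ) 1 := by
  obtain ⟨u, v, -, hu, hv⟩ := Γ.arc_ends e
  rcases eq_zero_or_one_or_mem_Ioo ht with rfl | rfl | h
  exacts [Or.inl ⟨u, hu⟩, Or.inl ⟨v, hv⟩, Or.inr h]

theorem arc_injOn_Icc (hloop : G.Loopless) (e : E) : InjOn (Γ.arc e) (Icc 0 1) := by
  obtain ⟨x, y, -, hx, hy⟩ := Γ.arc_ends e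
  have hne : Γ.arc e 0 ≠ Γ.arc e 1 := (Γ.pathEnd_injective hloop e).ne Bool.false_ne_true
  intro t ht t' ht' h
  rcases eq_zero_or_one_or_mem_Ioo ht with rfl | rfl | hti <;>
    rcases eq_zero_or_one_or_mem_Ioo ht' with rfl | rfl | hti'
  · rfl
  · exact absurd h hne
  · exact absurd (h.symm.trans hx) (Γ.arc_ne_vert e t' hti' x)
  · exact absurd h.symm hne
  · rfl
  · exact absurd (h.symm.trans hy) (Γ.arc_ne_vert e t' hti' y)
  · exact absurd (h.trans hx) (Γ.arc_ne_vert e t hti x)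
  · exact absurd (h.trans hy) (Γ.arc_ne_vert e t hti y)
  · exact Γ.arc_injOn e hti hti' h

theorem eventually_arc_ne (e : E) {K : Set ℝ} (hK : IsCompact K) (hK1 : K ⊆ Icc 0 1)
    {x : E3} (hx : ∀ t ∈ K, (Γ.arc e t : E3) ≠ x) :
    ∀ᶠ y in 𝓝 x, ∀ t ∈ K, (Γ.arc e t : E3) ≠ y := by
  have hclosed : IsClosed ((fun t => (Γ.arc e t : E3)) '' K) :=
    (hK.image_of_continuousOn ((Γ.arc_smooth e).continuousOn.mono hK1)).isClosed
  filter_upwards [hclosed.isOpen_compl.mem_nhds fun ⟨t, ht, h⟩ => hx t ht h] with y hy t ht h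
  exact hy ⟨t, ht, h⟩

theorem eventually_arc_ne_of_ne_vert (e : E) {x : E3} (hxv : ∀ v, (Γ.vert v : E3) ≠ x)
    (hx : ∀ t ∈ Ioo (0 : ℝ) 1, (Γ.arc e t : E3) ≠ x) :
    ∀ᶠ y in 𝓝 x, ∀ t ∈ Icc (0 : ℝ) 1, (Γ.arc e t : E3) ≠ y := by
  refine Γ.eventually_arc_ne e isCompact_Icc Subset.rfl fun t ht => ?_
  rcases Γ.exists_vert_eq_or_mem_Ioo e ht with ⟨v, hv⟩ | h
  · rw [hv]
    exact hxv v
  · exact hx t h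

theorem eventually_eq_and_mem_of_arc_eq [Finite E] (hloop : G.Loopless) (e : E) {t₀ : ℝ}
    (ht₀ : t₀ ∈ Ioo (0 : ℝ) 1) {N : Set ℝ} (hN : N ∈ 𝓝 t₀) :
    ∀ᶠ y in 𝓝 (Γ.arc e t₀ : E3), ∀ e', ∀ t ∈ Icc (0 : ℝ) 1, (Γ.arc e' t : E3) = y →
      e' = e ∧ t ∈ N := by
  refine eventually_all.2 fun e' => ?_
  rcases eq_or_ne e' e with rfl | he
  · have haway : ∀ t ∈ Icc (0 : ℝ) 1 \ interior N, (Γ.arc e' t : E3) ≠ Γ.arc e' t₀ := by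
      intro t ht h
      have heq := Γ.arc_injOn_Icc hloop e' ht.1 (Ioo_subset_Icc_self ht₀) (Subtype.ext h)
      exact ht.2 (heq ▸ mem_interior_iff_mem_nhds.2 hN)
    filter_upwards [Γ.eventually_arc_ne e' (isCompact_Icc.diff isOpen_interior) sdiff_subset haway]
      with y hy t ht h
    exact ⟨rfl, interior_subset (by_contra fun htN => hy t ⟨ht, htN⟩ h)⟩
  · filter_upwards [Γ.eventually_arc_ne_of_ne_vert e'
      (fun v h => Γ.arc_ne_vert e t₀ ht₀ v (Subtype.ext h.symm))
      fun t ht h => Γ.arc_ne_arc e' e he t ht t₀ ht₀ (Subtype.ext h)] with y hy t ht h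
    exact absurd h (hy t ht)

theorem deriv_arc_ne_zero (e : E) {t : ℝ} (ht : t ∈ Ioo (0 : ℝ) 1) :
    deriv (fun t => (Γ.arc e t : E3)) t ≠ 0 := by
  have hreg := Γ.arc_regular e t (Ioo_subset_Icc_self ht)
  rwa [pathVelocity, derivWithin_of_mem_nhds (Icc_mem_nhds ht.1 ht.2)] at hreg

theorem exists_local_extension [Finite E] (hloop : G.Loopless) {H : E → ℝ → ℝ}
    (hH : ∀ e, ContDiffOn ℝ ∞ (H e) (Ioo 0 1)) {x : E3} (hx : ∀ v, (Γ.vert v : E3) ≠ x) :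
    ∃ U ∈ 𝓝 x, ∃ g : E3 → ℝ, ContDiffOn ℝ ∞ g U ∧
      ∀ y ∈ U, ∀ e, ∀ t ∈ Ioo (0 : ℝ) 1, (Γ.arc e t : E3) = y → g y = H e t := by
  by_cases hx' : ∃ e, ∃ t ∈ Ioo (0 : ℝ) 1, (Γ.arc e t : E3) = x
  · obtain ⟨e, t₀, ht₀, rfl⟩ := hx'
    obtain ⟨U, hU, g, hg, hgH⟩ := exists_contDiffOn_comp_eventuallyEq (by simp) isOpen_Ioo
      ((Γ.arc_smooth e).mono Ioo_subset_Icc_self) (hH e) ht₀ (Γ.deriv_arc_ne_zero e ht₀)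
    refine ⟨_, inter_mem hU (Γ.eventually_eq_and_mem_of_arc_eq hloop e ht₀ hgH), g,
      hg.mono inter_subset_left, ?_⟩
    rintro y ⟨-, hy⟩ e' t ht rfl
    obtain ⟨rfl, hgt⟩ := hy e' t (Ioo_subset_Icc_self ht) rfl
    exact hgt
  · push Not at hx'
    exact ⟨_, eventually_all.2 fun e => Γ.eventually_arc_ne_of_ne_vert e hx (hx' e), fun _ => 0,
      contDiffOn_const, fun y hy e t ht h => absurd h (hy e t (Ioo_subset_Icc_self ht))⟩

theorem exists_extension [Finite V] [Finite E] (hloop : G.Loopless) {H : E → ℝ → ℝ}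
    (hH : ∀ e, ContDiffOn ℝ ∞ (H e) (Ioo 0 1)) {Q : V → E3 → ℝ} (hQ : ∀ v, ContDiff ℝ ∞ (Q v))
    (hHQ : ∀ v, ∀ᶠ x in 𝓝 (Γ.vert v : E3), ∀ e, ∀ t ∈ Ioo (0 : ℝ) 1,
      (Γ.arc e t : E3) = x → H e t = Q v x) :
    ∃ F : E3 → ℝ, ContDiff ℝ ∞ F ∧ (∀ v, F =ᶠ[𝓝 (Γ.vert v : E3)] Q v) ∧
      ∀ e, ∀ t ∈ Ioo (0 : ℝ) 1, F (Γ.arc e t) = H e t := by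
  obtain ⟨C, hC, hdisj⟩ := exists_isClosed_nhds_pairwise_disjoint
    (Subtype.val_injective.comp Γ.vert_injective) fun v => interior_mem_nhds.2 (hHQ v)
  let T : E3 → Set ℝ := fun x =>
    {y | (∀ v, x ∈ C v → y = Q v x) ∧ ∀ e, ∀ t ∈ Ioo (0 : ℝ) 1, (Γ.arc e t : E3) = x → y = H e t}
  have hconvex : ∀ x, Convex ℝ (T x) := by
    rintro x y ⟨hy₁, hy₂⟩ z ⟨hz₁, hz₂⟩ α β - - hαβ
    refine ⟨fun v hv => ?_, fun e t ht h => ?_⟩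
    · rw [hy₁ v hv, hz₁ v hv, Convex.combo_self hαβ]
    · rw [hy₂ e t ht h, hz₂ e t ht h, Convex.combo_self hαβ]
  have hlocal : ∀ x, ∃ U ∈ 𝓝 x, ∃ g : E3 → ℝ, ContMDiffOn 𝓘(ℝ, E3) 𝓘(ℝ, ℝ) ∞ g U ∧
      ∀ y ∈ U, g y ∈ T y := by
    intro x
    by_cases hx : ∃ v, x ∈ C v
    · obtain ⟨v, hv⟩ := hx
      have hother : ∀ᶠ y in 𝓝 x, ∀ v', v' ≠ v → y ∉ C v' := eventually_all.2 fun v' =>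
        eventually_imp_distrib_left.2 fun hne =>
          (hC v').1.isOpen_compl.mem_nhds (disjoint_right.1 (hdisj hne) hv)
      refine ⟨_, inter_mem (isOpen_interior.mem_nhds ((hC v).2.2 hv)) hother, Q v,
        (hQ v).contMDiff.contMDiffOn, fun y hy => ⟨fun v' hv' => ?_, fun e t ht h => ?_⟩⟩
      · rw [not_imp_not.1 (hy.2 v') hv']
      · exact (interior_subset hy.1 e t ht h).symm
    · push Not at hx
      obtain ⟨U, hU, g, hg, hgH⟩ := Γ.exists_local_extension hloop hH (x := x) fun v h =>
        hx v (by rw [← h]; exact mem_of_mem_nhds (hC v).2.1)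
      have hoff : ∀ᶠ y in 𝓝 x, ∀ v, y ∉ C v :=
        eventually_all.2 fun v => (hC v).1.isOpen_compl.mem_nhds (hx v)
      exact ⟨_, inter_mem hU hoff, g, (hg.mono inter_subset_left).contMDiffOn, fun y hy =>
        ⟨fun v hv => absurd hv (hy.2 v), hgH y hy.1⟩⟩
  obtain ⟨F, hF⟩ :=
    exists_contMDiffMap_forall_mem_convex_of_local (n := (⊤ : ℕ∞)) 𝓘(ℝ, E3) hconvex hlocal
  refine ⟨F, F.contMDiff.contDiff, fun v => ?_, fun e t ht => (hF _).2 e t ht rfl⟩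
  filter_upwards [(hC v).2.1] with x hx using (hF x).1 v hx

end SmoothEmbedding

/-! ### Functions which are monotone on the edges -/

/-- `P` is a smooth family of functions, parametrised by `A`, which deforms `F = P a₀` and keeps
its values on `W`. -/
structure IsDeformation {A X : Type*} [NormedAddCommGroup A] [NormedSpace ℝ A]
    [NormedAddCommGroup X] [NormedSpace ℝ X] (F : X → ℝ) (W : Set X) (a₀ : A) (P : A → X → ℝ) :
    Prop where
  contDiff : ContDiff ℝ ∞ fun z : A × X => P z.1 z.2
  base : P a₀ = F
  eqOn : ∀ a, EqOn (P a) F W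

namespace IsDeformation

variable {A X : Type*} [NormedAddCommGroup A] [NormedSpace ℝ A] [NormedAddCommGroup X]
  [NormedSpace ℝ X] {F : X → ℝ} {W : Set X} {a₀ : A} {P : A → X → ℝ}

theorem contDiff_apply (hP : IsDeformation F W a₀ P) (a : A) : ContDiff ℝ ∞ (P a) :=
  hP.contDiff.comp (contDiff_prodMk_right a)

theorem continuous_fderiv (hP : IsDeformation F W a₀ P) :
    Continuous fun z : A × X => fderiv ℝ (P z.1) z.2 := by
  have h : ContDiff ℝ 1 (Function.uncurry fun z : A × X => P z.1) :=
    (contDiff_infty.1 hP.contDiff 1).comp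
      ((contDiff_fst.comp contDiff_fst).prodMk contDiff_snd)
  exact (h.fderiv (n := 0) contDiff_snd (by simp)).continuous

end IsDeformation

theorem exists_sign_mul_pos {a : ℝ} (ha : a ≠ 0) : ∃ σ : ℝ, (σ = 1 ∨ σ = -1) ∧ 0 < σ * a := by
  rcases ha.lt_or_gt with h | h
  · exact ⟨-1, Or.inr rfl, by linarith⟩
  · exact ⟨1, Or.inl rfl, by linarith⟩

theorem tendsto_one_sub_nhdsLT : Tendsto (fun t : ℝ => 1 - t) (𝓝[<] 1) (𝓝[>] 0) := by
  refine tendsto_nhdsWithin_iff.2 ⟨?_, ?_⟩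
  · have h : Continuous fun t : ℝ => 1 - t := by fun_prop
    exact (h.tendsto' 1 0 (sub_self 1)).mono_left nhdsWithin_le_nhds
  · filter_upwards [self_mem_nhdsWithin] with t ht using sub_pos.2 (mem_Iio.1 ht)

namespace SmoothEmbedding

variable {V E : Type*} {G : Multigraph V E} (Γ : SmoothEmbedding G)

/-- A smooth function with the values `c` at the vertices which is increasing or decreasing along
each edge, according to the sign `σ`. -/
structure IsHeight (c : V → ℝ) (σ : E → ℝ) (F : E3 → ℝ) : Prop where
  smooth : ContDiff ℝ ∞ F
  vert : ∀ v, F (Γ.vert v) = c v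
  deriv_pos : ∀ e, ∀ t ∈ Ioo (0 : ℝ) 1, 0 < σ e * deriv (fun t => F (Γ.arc e t)) t

theorem eventually_of_arc_eq_of_vert (e : E) {v : V} {p : ℝ → Prop}
    (h₀ : Γ.arc e 0 = Γ.vert v → ∀ᶠ t in 𝓝[>] (0 : ℝ), p t)
    (h₁ : Γ.arc e 1 = Γ.vert v → ∀ᶠ t in 𝓝[<] (1 : ℝ), p t) :
    ∀ᶠ z in 𝓝 (Γ.vert v : E3), ∀ t ∈ Ioo (0 : ℝ) 1, (Γ.arc e t : E3) = z → p t := by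
  let N : Set ℝ := {t | t ∈ Ioo (0 : ℝ) 1 → p t}
  have hN : ∀ t ∈ Icc (0 : ℝ) 1, Γ.arc e t = Γ.vert v → N ∈ 𝓝 t := by
    intro t ht htv
    rcases eq_zero_or_one_or_mem_Ioo ht with rfl | rfl | ht
    · exact (eventually_nhdsWithin_iff.1 (h₀ htv)).mono fun t hp ht => hp ht.1
    · exact (eventually_nhdsWithin_iff.1 (h₁ htv)).mono fun t hp ht => hp ht.2
    · exact absurd htv (Γ.arc_ne_vert e t ht v)
  have haway : ∀ t ∈ Icc (0 : ℝ) 1 \ interior N, (Γ.arc e t : E3) ≠ Γ.vert v := fun t ht h =>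
    ht.2 (mem_interior_iff_mem_nhds.2 (hN t ht.1 (Subtype.ext h)))
  filter_upwards [Γ.eventually_arc_ne e (isCompact_Icc.diff isOpen_interior) sdiff_subset haway]
    with z hz t ht htz
  exact interior_subset (by_contra fun htN => hz t ⟨Ioo_subset_Icc_self ht, htN⟩ htz) ht

theorem exists_monotone_glue_arc (e : E) {σ : ℝ} (hσ : σ = 1 ∨ σ = -1) {Q₀ Q₁ : E3 → ℝ}
    (hQ₀ : ContDiff ℝ ∞ Q₀) (hQ₁ : ContDiff ℝ ∞ Q₁)
    (hlt : 0 < σ * (Q₁ (Γ.arc e 1) - Q₀ (Γ.arc e 0)))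
    (h₀ : ∀ᶠ t in 𝓝[>] (0 : ℝ), 0 < σ * deriv (Q₀ ∘ endPath (Γ.arc e) false) t)
    (h₁ : ∀ᶠ t in 𝓝[>] (0 : ℝ), 0 < -σ * deriv (Q₁ ∘ endPath (Γ.arc e) true) t) :
    ∃ H : ℝ → ℝ, ContDiffOn ℝ ∞ H (Ioo 0 1) ∧ (∀ᶠ t in 𝓝[>] (0 : ℝ), H t = Q₀ (Γ.arc e t)) ∧
      (∀ᶠ t in 𝓝[<] (1 : ℝ), H t = Q₁ (Γ.arc e t)) ∧ ∀ t ∈ Ioo (0 : ℝ) 1, 0 < σ * deriv H t := by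
  refine exists_monotone_glue hσ (hQ₀.comp_contDiffOn (Γ.arc_smooth e))
    (hQ₁.comp_contDiffOn (Γ.arc_smooth e)) hlt h₀ ?_
  filter_upwards [tendsto_one_sub_nhdsLT.eventually h₁] with t ht
  have hderiv : deriv (Q₁ ∘ endPath (Γ.arc e) true) (1 - t) =
      -deriv (fun t => Q₁ (Γ.arc e t)) (1 - (1 - t)) :=
    deriv_comp_const_sub (fun t => Q₁ (Γ.arc e t)) 1 (1 - t)
  rwa [hderiv, sub_sub_cancel, neg_mul_neg] at ht

theorem exists_isHeight_of_vertexModels [Finite V] [Finite E] (hloop : G.Loopless) {σ : E → ℝ}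
    (hσ : ∀ e, σ e = 1 ∨ σ e = -1) {Q : V → E3 → ℝ} (hQ : ∀ v, ContDiff ℝ ∞ (Q v))
    (hlt : ∀ e u v, Γ.arc e 0 = Γ.vert u → Γ.arc e 1 = Γ.vert v →
      0 < σ e * (Q v (Γ.vert v) - Q u (Γ.vert u)))
    (hmono : ∀ v (i : Γ.EdgeEnd v), ∀ᶠ t in 𝓝[>] (0 : ℝ),
      0 < (if i.1.2 then -σ i.1.1 else σ i.1.1) * deriv (Q v ∘ i.path) t) :
    ∃ F, Γ.IsHeight (fun v => Q v (Γ.vert v)) σ F ∧ ∀ v, F =ᶠ[𝓝 (Γ.vert v : E3)] Q v := by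
  choose x y _ hx hy using Γ.arc_ends
  have hglue : ∀ e, ∃ H : ℝ → ℝ, ContDiffOn ℝ ∞ H (Ioo 0 1) ∧
      (∀ᶠ t in 𝓝[>] (0 : ℝ), H t = Q (x e) (Γ.arc e t)) ∧
      (∀ᶠ t in 𝓝[<] (1 : ℝ), H t = Q (y e) (Γ.arc e t)) ∧
      ∀ t ∈ Ioo (0 : ℝ) 1, 0 < σ e * deriv H t := fun e =>
    Γ.exists_monotone_glue_arc e (hσ e) (hQ _) (hQ _)
      (by rw [hx, hy]; exact hlt e _ _ (hx e) (hy e))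
      (hmono _ ⟨(e, false), hx e⟩) (hmono _ ⟨(e, true), hy e⟩)
  choose H hH hH₀ hH₁ hH' using hglue
  have hHQ : ∀ v, ∀ᶠ z in 𝓝 (Γ.vert v : E3), ∀ e, ∀ t ∈ Ioo (0 : ℝ) 1,
      (Γ.arc e t : E3) = z → H e t = Q v z := by
    intro v
    refine eventually_all.2 fun e => ?_
    have h := Γ.eventually_of_arc_eq_of_vert e (v := v) (p := fun t => H e t = Q v (Γ.arc e t))
      (fun h => by
        obtain rfl := Γ.vert_injective ((hx e).symm.trans h)
        exact hH₀ e)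
      (fun h => by
        obtain rfl := Γ.vert_injective ((hy e).symm.trans h)
        exact hH₁ e)
    filter_upwards [h] with z hz t ht htz
    rw [hz t ht htz, htz]
  obtain ⟨F, hF, hFQ, hFH⟩ := Γ.exists_extension hloop hH hQ hHQ
  refine ⟨F, ⟨hF, fun v => (hFQ v).eq_of_nhds, fun e t ht => ?_⟩, hFQ⟩
  have hFe : (fun t => F (Γ.arc e t)) =ᶠ[𝓝 t] H e :=
    eventually_of_mem (isOpen_Ioo.mem_nhds ht) (hFH e)
  rw [hFe.deriv_eq]
  exact hH' e t ht

theorem exists_isHeight [Finite V] [Finite E] (hdeg : ∀ v, G.degree v ≤ 4) (hloop : G.Loopless)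
    {c : V → ℝ} (hc : Function.Injective c) :
    ∃ σ F, (∀ e, σ e = 1 ∨ σ e = -1) ∧ Γ.IsHeight c σ F ∧
      (∀ v, ∀ᶠ y in 𝓝[≠] (Γ.vert v : E3), y ∉ sphereCriticalSet F) ∧
      ∀ v, IsSphereCritical F (Γ.vert v) → IsSphereNondegenerate F (Γ.vert v) := by
  have hsign : ∀ e, ∃ σ : ℝ, (σ = 1 ∨ σ = -1) ∧ ∀ u v, Γ.arc e 0 = Γ.vert u →
      Γ.arc e 1 = Γ.vert v → 0 < σ * (c v - c u) := by
    intro e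
    obtain ⟨x, y, -, hx, hy⟩ := Γ.arc_ends e
    have hxy : y ≠ x := fun h => (Γ.pathEnd_injective hloop e).ne Bool.false_ne_true
      (hx.trans (h ▸ hy.symm))
    obtain ⟨σ, hσ, hpos⟩ := exists_sign_mul_pos (sub_ne_zero.2 (hc.ne hxy))
    refine ⟨σ, hσ, fun u v hu hv => ?_⟩
    rwa [Γ.vert_injective (hu.symm.trans hx), Γ.vert_injective (hv.symm.trans hy)]
  choose σ hσ hpos using hsign
  choose q hq hq0 hiso hcrit hmono using fun v => Γ.exists_vertexModel hloop (hdeg v)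
    (s := fun i => if i.1.2 then -σ i.1.1 else σ i.1.1)
    fun i => by rcases hσ i.1.1 with h | h <;> cases i.1.2 <;> simp [h]
  obtain ⟨F, hF, hFq⟩ := Γ.exists_isHeight_of_vertexModels hloop hσ
    (Q := fun v z => q v z + c v) (fun v => (hq v).add contDiff_const)
    (by simpa only [hq0, zero_add] using hpos)
    fun v i => (hmono v i).mono fun t ht => by
      rw [Function.comp_def, deriv_add_const]
      exact ht
  simp only [hq0, zero_add] at hF
  refine ⟨σ, F, hσ, hF, fun v => ?_, fun v hv => ?_⟩
  · filter_upwards [hiso v, (hFq v).eventuallyEq_nhds.filter_mono nhdsWithin_le_nhds]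
      with z hz hFz hzF
    exact hz ⟨hzF.1, (isSphereCritical_add_const _).1 ((isSphereCritical_congr hFz).1 hzF.2)⟩
  · rw [isSphereCritical_congr (hFq v), isSphereCritical_add_const] at hv
    rw [isSphereNondegenerate_congr (hFq v), isSphereNondegenerate_add_const]
    exact hcrit v hv

section Deformation

variable {Γ} {c : V → ℝ} {σ : E → ℝ} {F : E3 → ℝ}
  {A : Type*} [NormedAddCommGroup A] [NormedSpace ℝ A] {P : A → E3 → ℝ} {a₀ : A} {W : Set E3}

theorem continuousAt_deriv_comp_arc (hP : IsDeformation F W a₀ P) (a : A) (e : E) {t : ℝ}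
    (ht : t ∈ Ioo (0 : ℝ) 1) :
    ContinuousAt (fun z : A × ℝ => deriv (fun t => P z.1 (Γ.arc e t)) z.2) (a, t) := by
  have harc : ContDiffAt ℝ 1 (fun t => (Γ.arc e t : E3)) t :=
    contDiffAt_infty.1 ((Γ.arc_smooth e).contDiffAt (Icc_mem_nhds ht.1 ht.2)) 1
  have hcomp : ContDiffAt ℝ 1 (Function.uncurry fun (z : A × ℝ) (t : ℝ) => P z.1 (Γ.arc e t))
      ((a, t), t) :=
    ContDiffAt.comp (g := fun z : A × E3 => P z.1 z.2)
      (f := fun w : (A × ℝ) × ℝ => (w.1.1, (Γ.arc e w.2 : E3))) _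
      (contDiff_infty.1 hP.contDiff 1).contDiffAt
      (contDiffAt_fst.fst.prodMk
        (ContDiffAt.comp (g := fun t => (Γ.arc e t : E3)) ((a, t), t) harc contDiffAt_snd))
  exact ((hcomp.fderiv (m := 0) contDiffAt_snd (by simp)).continuousAt).clm_apply
    continuousAt_const

theorem isCompact_Icc_inter_arc_notMem (hW : IsOpen W) (e : E) :
    IsCompact (Icc (0 : ℝ) 1 ∩ {t | (Γ.arc e t : E3) ∉ W}) :=
  isCompact_Icc.of_isClosed_subset
    ((Γ.arc_smooth e).continuousOn.preimage_isClosed_of_isClosed isClosed_Icc hW.isClosed_compl)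
    inter_subset_left

theorem IsHeight.eventually_of_isDeformation [Finite E] (hF : Γ.IsHeight c σ F)
    (hP : IsDeformation F W a₀ P) (hW : IsOpen W) (hvW : ∀ v, (Γ.vert v : E3) ∈ W) :
    ∀ᶠ a in 𝓝 a₀, Γ.IsHeight c σ (P a) := by
  have hpos : ∀ᶠ a in 𝓝 a₀, ∀ e, ∀ t ∈ Icc (0 : ℝ) 1 ∩ {t | (Γ.arc e t : E3) ∉ W},
      0 < σ e * deriv (fun t => P a (Γ.arc e t)) t := by
    refine eventually_all.2 fun e =>
      (isCompact_Icc_inter_arc_notMem hW e).eventually_forall_of_forall_eventually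
        fun t ⟨ht, htW⟩ => ?_
    obtain ⟨v, hv⟩ | hti := Γ.exists_vert_eq_or_mem_Ioo e ht
    · exact absurd (hv ▸ hvW v) htW
    · refine (continuousAt_const.mul
        (continuousAt_deriv_comp_arc hP a₀ e hti)).eventually_const_lt ?_
      simpa only [Pi.mul_apply, hP.base] using hF.deriv_pos e t hti
  filter_upwards [hpos] with a ha
  refine ⟨hP.contDiff_apply a, fun v => (hP.eqOn a (hvW v)).trans (hF.vert v), fun e t ht => ?_⟩
  by_cases htW : (Γ.arc e t : E3) ∈ W
  · have hcont : ContinuousAt (fun t => (Γ.arc e t : E3)) t :=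
      ((Γ.arc_smooth e).contDiffAt (Icc_mem_nhds ht.1 ht.2)).continuousAt
    have heq : (fun t => P a (Γ.arc e t)) =ᶠ[𝓝 t] fun t => F (Γ.arc e t) :=
      (hcont.eventually (hW.eventually_mem htW)).mono fun t ht => hP.eqOn a ht
    rw [heq.deriv_eq]
    exact hF.deriv_pos e t ht
  · exact ha e t ⟨Ioo_subset_Icc_self ht, htW⟩

end Deformation

end SmoothEmbedding

/-! ### Perturbation to a Morse function with distinct critical values -/

section Perturbation

variable {X : Type*} [NormedAddCommGroup X] [InnerProductSpace ℝ X] {F χ : X → ℝ} {W : Set X}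

theorem isDeformation_add_mul_inner (hF : ContDiff ℝ ∞ F) (hχ : ContDiff ℝ ∞ χ)
    (hW : EqOn χ 0 W) : IsDeformation F W 0 fun a x => F x + χ x * inner ℝ a x where
  contDiff := (hF.comp contDiff_snd).add
    ((hχ.comp contDiff_snd).mul (contDiff_fst.inner ℝ contDiff_snd))
  base := by simp
  eqOn a x hx := by simp [hW hx]

theorem isDeformation_add_mul (hF : ContDiff ℝ ∞ F) (hχ : ContDiff ℝ ∞ χ) (hW : EqOn χ 0 W) :
    IsDeformation F W 0 fun (s : ℝ) x => F x + s * χ x where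
  contDiff := (hF.comp contDiff_snd).add (contDiff_fst.mul (hχ.comp contDiff_snd))
  base := by simp
  eqOn s x hx := by simp [hW hx]

theorem eventually_eq_and_eq_of_add_mul_eq {α : Type*} {S : Set α} (hS : S.Finite) (F χ : α → ℝ) :
    ∀ᶠ s in 𝓝[≠] (0 : ℝ), ∀ x ∈ S, ∀ y ∈ S, F x + s * χ x = F y + s * χ y →
      F x = F y ∧ χ x = χ y := by
  refine hS.eventually_all.2 fun x _ => hS.eventually_all.2 fun y _ => ?_
  by_cases hχ : χ x = χ y
  · exact Eventually.of_forall fun s h => ⟨by rwa [hχ, add_left_inj] at h, hχ⟩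
  · have hne := sub_ne_zero.2 hχ
    rcases eq_or_ne ((F y - F x) / (χ x - χ y)) 0 with h0 | h0
    · filter_upwards [self_mem_nhdsWithin] with s hs h
      refine absurd ?_ hs
      rw [mem_singleton_iff, ← h0, eq_div_iff hne]
      linarith
    · filter_upwards [eventually_ne_nhdsWithin h0.symm] with s hs h
      refine absurd ?_ hs
      rw [eq_div_iff hne]
      linarith

theorem exists_label_eq_zero_on {α : Type*} {S : Set α} (hS : S.Countable) (Z : Set α) :
    ∃ n : α → ℝ, (∀ x ∈ Z, n x = 0) ∧
      ∀ x ∈ S, ∀ y ∈ S, n x = n y → x = y ∨ (x ∈ Z ∧ y ∈ Z) := by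
  classical
  obtain ⟨m, hm⟩ := countable_iff_exists_injOn.1 hS
  refine ⟨fun x => if x ∈ Z then 0 else (m x + 1 : ℕ), fun x hx => if_pos hx, ?_⟩
  intro x hx y hy h
  by_cases hxZ : x ∈ Z <;> by_cases hyZ : y ∈ Z <;>
    simp only [hxZ, hyZ, if_true, if_false, ← Nat.cast_zero (R := ℝ), Nat.cast_inj] at h
  · exact Or.inr ⟨hxZ, hyZ⟩
  · omega
  · omega
  · exact Or.inl (hm hx hy (by omega))

variable [FiniteDimensional ℝ X]

theorem exists_contDiff_cutoff {s t : Set X} (hs : IsClosed s) (ht : IsClosed t)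
    (hst : Disjoint s t) :
    ∃ χ : X → ℝ, ContDiff ℝ ∞ χ ∧ (∀ x ∈ s, ∀ᶠ y in 𝓝 x, χ y = 0) ∧
      ∀ x ∈ t, ∀ᶠ y in 𝓝 x, χ y = 1 := by
  obtain ⟨χ, h₀, h₁, -⟩ := exists_contMDiffMap_zero_one_nhds_of_isClosed (n := (⊤ : ℕ∞))
    𝓘(ℝ, X) hs ht hst
  exact ⟨χ, χ.contMDiff.contDiff, eventually_nhdsSet_iff_forall.1 h₀,
    eventually_nhdsSet_iff_forall.1 h₁⟩

theorem exists_contDiff_eventuallyEq_const {S : Set X} (hS : S.Finite) (n : X → ℝ) :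
    ∃ χ : X → ℝ, ContDiff ℝ ∞ χ ∧ ∀ z ∈ S, ∀ᶠ x in 𝓝 z, χ x = n z := by
  classical
  have hbump : ∀ z, ∃ χ : X → ℝ, ContDiff ℝ ∞ χ ∧
      ∀ z' ∈ S, ∀ᶠ x in 𝓝 z', χ x = if z' = z then 1 else 0 := by
    intro z
    obtain ⟨χ, hχ, h₀, h₁⟩ := exists_contDiff_cutoff (hS.sdiff (t := {z})).isClosed
      isClosed_singleton disjoint_sdiff_left
    refine ⟨χ, hχ, fun z' hz' => ?_⟩
    split_ifs with h
    exacts [h₁ z' h, h₀ z' ⟨hz', h⟩]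
  choose χ hχ hloc using hbump
  refine ⟨fun x => ∑ z ∈ hS.toFinset, n z * χ z x,
    ContDiff.sum fun z _ => contDiff_const.mul (hχ z), fun z hz => ?_⟩
  filter_upwards [hS.toFinset.eventually_all.2 fun z' _ => hloc z' z hz] with x hx
  rw [Finset.sum_congr rfl fun z' hz' => by rw [hx z' hz']]
  simp [hz]

theorem eventually_isSphereMorse_add_mul_inner (hF : ContDiff ℝ ∞ F) (hχ : ContDiff ℝ ∞ χ)
    {U₀ U₁ : Set X} (hU₀ : IsOpen U₀) (hU₁ : IsOpen U₁) (h₀ : EqOn χ 0 U₀) (h₁ : EqOn χ 1 U₁)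
    (hU : sphereCriticalSet F ⊆ U₀ ∪ U₁)
    (hnd : ∀ x ∈ sphereCriticalSet F ∩ U₀, IsSphereNondegenerate F x) :
    ∀ᶠ a in 𝓝 (0 : X), IsSphereMorse (fun x => F x + inner ℝ a x) →
      IsSphereMorse fun x => F x + χ x * inner ℝ a x := by
  have hP := isDeformation_add_mul_inner hF hχ h₀
  have hK : IsCompact (Metric.sphere (0 : X) 1 \ (U₀ ∪ U₁)) :=
    (isCompact_sphere 0 1).diff (hU₀.union hU₁)
  have hstable := eventually_forall_not_isSphereCritical (P := fun a x => F x + χ x * inner ℝ a x)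
    hP.continuous_fderiv hK (fun x hx => mem_sphere_zero_iff_norm.1 hx.1) (a₀ := 0)
    fun x hx hcx => hx.2 (hU ⟨mem_sphere_zero_iff_norm.1 hx.1, by rwa [hP.base] at hcx⟩)
  filter_upwards [hstable] with a ha hmorse x hx hcx
  by_cases hx₀ : x ∈ U₀
  · have heq : (fun y => F y + χ y * inner ℝ a y) =ᶠ[𝓝 x] F :=
      eventually_of_mem (hU₀.mem_nhds hx₀) (hP.eqOn a)
    rw [isSphereCritical_congr heq] at hcx
    rw [isSphereNondegenerate_congr heq]
    exact hnd x ⟨⟨hx, hcx⟩, hx₀⟩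
  · by_cases hx₁ : x ∈ U₁
    · have heq : (fun y => F y + χ y * inner ℝ a y) =ᶠ[𝓝 x] fun y => F y + inner ℝ a y :=
        eventually_of_mem (hU₁.mem_nhds hx₁) fun y hy => by simp [h₁ hy]
      rw [isSphereCritical_congr heq] at hcx
      rw [isSphereNondegenerate_congr heq]
      exact hmorse x hx hcx
    · exact absurd hcx (ha x ⟨mem_sphere_zero_iff_norm.2 hx, fun h => h.elim hx₀ hx₁⟩)

theorem eventually_isSphereMorse_add_mul (hF : ContDiff ℝ ∞ F) (hnd : IsSphereMorse F)
    (hχ : ContDiff ℝ ∞ χ) (hconst : ∀ x ∈ sphereCriticalSet F, ∀ᶠ y in 𝓝 x, χ y = χ x) :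
    ∀ᶠ s in 𝓝 (0 : ℝ), IsSphereMorse (fun x => F x + s * χ x) ∧
      sphereCriticalSet (fun x => F x + s * χ x) ⊆ sphereCriticalSet F := by
  have hP := isDeformation_add_mul hF hχ (eqOn_empty χ 0)
  let U : Set X := {x | ∀ᶠ y in 𝓝 x, χ y = χ x}
  have hU : IsOpen U := isOpen_iff_mem_nhds.2 fun x (hx : ∀ᶠ y in 𝓝 x, χ y = χ x) =>
    hx.eventually_nhds.mono fun y hy =>
      hy.mono fun z hz => hz.trans hy.self_of_nhds.symm
  have hloc : ∀ s, ∀ x ∈ U, (fun y => F y + s * χ y) =ᶠ[𝓝 x] fun y => F y + s * χ x :=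
    fun s x hx => hx.mono fun y hy => by simp only [hy]
  have hK : IsCompact (Metric.sphere (0 : X) 1 \ U) := (isCompact_sphere 0 1).diff hU
  have hstable := eventually_forall_not_isSphereCritical (P := fun (s : ℝ) x => F x + s * χ x)
    hP.continuous_fderiv hK (fun x hx => mem_sphere_zero_iff_norm.1 hx.1) (a₀ := 0)
    fun x hx hcx => hx.2 (hconst x ⟨mem_sphere_zero_iff_norm.1 hx.1, by rwa [hP.base] at hcx⟩)
  filter_upwards [hstable] with s hs
  have hcrit : ∀ x ∈ sphereCriticalSet (fun x => F x + s * χ x),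
      x ∈ U ∧ IsSphereCritical F x := by
    rintro x ⟨hx, hcx⟩
    have hxU : x ∈ U := by_contra fun hxU => hs x ⟨mem_sphere_zero_iff_norm.2 hx, hxU⟩ hcx
    rw [isSphereCritical_congr (hloc s x hxU), isSphereCritical_add_const] at hcx
    exact ⟨hxU, hcx⟩
  refine ⟨fun x hx hcx => ?_, fun x hx => ⟨hx.1, (hcrit x hx).2⟩⟩
  obtain ⟨hxU, hcxF⟩ := hcrit x ⟨hx, hcx⟩
  rw [isSphereNondegenerate_congr (hloc s x hxU), isSphereNondegenerate_add_const]
  exact hnd x hx hcxF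

end Perturbation

namespace SmoothEmbedding

variable {V E : Type*} {G : Multigraph V E} {Γ : SmoothEmbedding G} {c : V → ℝ} {σ : E → ℝ}
  {F : E3 → ℝ}

theorem IsHeight.exists_isSphereMorse [Finite V] [Finite E] (hF : Γ.IsHeight c σ F)
    (hiso : ∀ v, ∀ᶠ y in 𝓝[≠] (Γ.vert v : E3), y ∉ sphereCriticalSet F)
    (hcrit : ∀ v, IsSphereCritical F (Γ.vert v) → IsSphereNondegenerate F (Γ.vert v)) :
    ∃ F', Γ.IsHeight c σ F' ∧ IsSphereMorse F' := by
  let Z : Set E3 := range fun v => (Γ.vert v : E3)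
  let O : Set E3 := interior {y | y ∈ sphereCriticalSet F → y ∈ Z}
  have hZO : Disjoint Z Oᶜ := by
    rw [disjoint_compl_right_iff_subset]
    rintro _ ⟨v, rfl⟩
    refine mem_interior_iff_mem_nhds.2 ((eventually_nhdsWithin_iff.1 (hiso v)).mono ?_)
    exact fun y hy hyF => by_contra fun hyZ => hy (fun h => hyZ ⟨v, h.symm⟩) hyF
  obtain ⟨χ, hχ, hχ₀, hχ₁⟩ := exists_contDiff_cutoff (finite_range _).isClosed
    isOpen_interior.isClosed_compl hZO
  have hχ₀' : EqOn χ 0 (interior {x | χ x = 0}) :=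
    fun x hx => interior_subset (s := {x | χ x = 0}) hx
  have hχ₁' : EqOn χ 1 (interior {x | χ x = 1}) :=
    fun x hx => interior_subset (s := {x | χ x = 1}) hx
  have hvert : ∀ v, (Γ.vert v : E3) ∈ interior {x | χ x = 0} := fun v =>
    mem_interior_iff_mem_nhds.2 (hχ₀ _ ⟨v, rfl⟩)
  have hoff : ∀ x ∉ O, x ∈ interior {x | χ x = 1} := fun x hx =>
    mem_interior_iff_mem_nhds.2 (hχ₁ x hx)
  have hcover : sphereCriticalSet F ⊆ interior {x | χ x = 0} ∪ interior {x | χ x = 1} := by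
    intro x hx
    by_cases hxO : x ∈ O
    · obtain ⟨v, rfl⟩ := interior_subset hxO hx
      exact Or.inl (hvert v)
    · exact Or.inr (hoff x hxO)
  have hnd : ∀ x ∈ sphereCriticalSet F ∩ interior {x | χ x = 0}, IsSphereNondegenerate F x := by
    rintro x ⟨hx, hx₀⟩
    have hxO : x ∈ O := by_contra fun hxO =>
      zero_ne_one ((hχ₀' hx₀).symm.trans (hχ₁' (hoff x hxO)))
    obtain ⟨v, rfl⟩ := interior_subset hxO hx
    exact hcrit v hx.2
  have hmorse := eventually_isSphereMorse_add_mul_inner hF.smooth hχ isOpen_interior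
    isOpen_interior hχ₀' hχ₁' hcover hnd
  have hheight := hF.eventually_of_isDeformation (isDeformation_add_mul_inner hF.smooth hχ hχ₀')
    isOpen_interior hvert
  have hdense := MeasureTheory.Measure.dense_of_ae (ae_isSphereMorse_add_inner
    MeasureTheory.volume (hF.smooth.differentiable (by simp))
    ((hF.smooth.fderiv_right (m := ∞) le_rfl).differentiable (by simp)))
  obtain ⟨a, ha, haheight, hamorse⟩ := hdense.inter_nhds_nonempty (hheight.and hmorse)
  exact ⟨_, haheight, hamorse ha⟩

theorem IsHeight.exists_isSphereMorse_injOn [Finite V] [Finite E] (hF : Γ.IsHeight c σ F)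
    (hc : Function.Injective c) (hnd : IsSphereMorse F) :
    ∃ F', Γ.IsHeight c σ F' ∧ IsSphereMorse F' ∧ InjOn F' (sphereCriticalSet F') := by
  let Z : Set E3 := range fun v => (Γ.vert v : E3)
  have hfinite : (sphereCriticalSet F).Finite := hnd.finite_sphereCriticalSet
    ((hF.smooth.fderiv_right (m := ∞) le_rfl).differentiable (by simp))
  have hS : (sphereCriticalSet F ∪ Z).Finite := hfinite.union (finite_range _)
  obtain ⟨n, hnZ, hn⟩ := exists_label_eq_zero_on hfinite.countable Z
  obtain ⟨χ, hχ, hχn⟩ := exists_contDiff_eventuallyEq_const hS n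
  have hχeq : ∀ x ∈ sphereCriticalSet F, χ x = n x := fun x hx => (hχn x (Or.inl hx)).self_of_nhds
  have hheight := hF.eventually_of_isDeformation (W := interior {x | χ x = 0})
    (isDeformation_add_mul hF.smooth hχ fun x hx => interior_subset (s := {x | χ x = 0}) hx)
    isOpen_interior fun v =>
      mem_interior_iff_mem_nhds.2
        ((hχn _ (Or.inr ⟨v, rfl⟩)).mono fun y hy => hy.trans (hnZ _ ⟨v, rfl⟩))
  have hmorse := eventually_isSphereMorse_add_mul hF.smooth hnd hχ fun x hx =>
    (hχn x (Or.inl hx)).mono fun y hy => hy.trans (hχeq x hx).symm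
  obtain ⟨s, ⟨hsheight, hsmorse, hssub⟩, hsinj⟩ := (((hheight.and hmorse).filter_mono
    (nhdsWithin_le_nhds (s := {0}ᶜ))).and (eventually_eq_and_eq_of_add_mul_eq hfinite F χ)).exists
  refine ⟨_, hsheight, hsmorse, fun x hx y hy hxy => ?_⟩
  obtain ⟨hFxy, hχxy⟩ := hsinj x (hssub hx) y (hssub hy) hxy
  rw [hχeq x (hssub hx), hχeq y (hssub hy)] at hχxy
  rcases hn x (hssub hx) y (hssub hy) hχxy with h | ⟨⟨u, rfl⟩, ⟨v, rfl⟩⟩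
  · exact h
  · rw [hF.vert, hF.vert] at hFxy
    rw [hc hFxy]

theorem exists_isHeight_isGeneric [Finite V] [Finite E] (Γ : SmoothEmbedding G)
    (hdeg : ∀ v, G.degree v ≤ 4) (hloop : G.Loopless) {c : V → ℝ} (hc : Function.Injective c) :
    ∃ σ F, (∀ e, σ e = 1 ∨ σ e = -1) ∧ Γ.IsHeight c σ F ∧ Γ.IsGeneric fun x : S2 => F x := by
  obtain ⟨σ, F₀, hσ, hF₀, hiso, hcrit⟩ := Γ.exists_isHeight hdeg hloop hc
  obtain ⟨F₁, hF₁, hnd₁⟩ := hF₀.exists_isSphereMorse hiso hcrit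
  obtain ⟨F, hF, hnd, hinj⟩ := hF₁.exists_isSphereMorse_injOn hc hnd₁
  refine ⟨σ, F, hσ, hF, ⟨isMorse_restrict hF.smooth hnd, fun p hp q hq hpq => ?_, ?_⟩⟩
  · rw [mem_criticalSet_restrict_iff hF.smooth] at hp hq
    exact Subtype.ext (hinj ⟨by simp, hp⟩ ⟨by simp, hq⟩ hpq)
  · simpa only [hF.vert] using hc

end SmoothEmbedding

/-! ### Counting points in level sets -/

namespace Multigraph

variable {V E : Type*} (G : Multigraph V E)

theorem edgeBoundary_subset_of_forall_mem_iff {A B : Set V}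
    (h : ∀ e, ∀ v ∈ G.ends e, v ∈ A ↔ v ∈ B) : G.edgeBoundary A ⊆ G.edgeBoundary B := by
  rintro e ⟨u, v, huv, hu, hv⟩
  exact ⟨u, v, huv, (h e u (huv ▸ Sym2.mem_mk_left u v)).1 hu,
    mt (h e v (huv ▸ Sym2.mem_mk_right u v)).2 hv⟩

variable [Fintype V]

theorem ncard_edgeBoundary_Iic_le (φ : Fin (Fintype.card V) ≃ V) (i : Fin (Fintype.card V)) :
    (G.edgeBoundary (φ '' Iic i)).ncard ≤ G.orderingWidth φ :=
  Finset.le_sup (f := fun i => (G.edgeBoundary (φ '' Iic i)).ncard) (Finset.mem_univ i)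

theorem ncard_edgeBoundary_le_orderingWidth [Finite E] (φ : Fin (Fintype.card V) ≃ V) {A : Set V}
    (hA : ∀ u v, (∃ e, u ∈ G.ends e) → v ∈ A → (∃ e, v ∈ G.ends e) → φ.symm u ≤ φ.symm v →
      u ∈ A) : (G.edgeBoundary A).ncard ≤ G.orderingWidth φ := by
  rcases (G.edgeBoundary A).eq_empty_or_nonempty with hempty | ⟨e, v, w, he, hvA, -⟩
  · simp [hempty]
  obtain ⟨m, ⟨hmA, hm⟩, hmax⟩ := exists_max_image {v | v ∈ A ∧ ∃ e, v ∈ G.ends e} φ.symm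
    (toFinite _) ⟨v, hvA, e, he ▸ Sym2.mem_mk_left v w⟩
  refine (ncard_le_ncard (G.edgeBoundary_subset_of_forall_mem_iff fun e u hu => ?_)).trans
    (G.ncard_edgeBoundary_Iic_le φ (φ.symm m))
  rw [Equiv.image_eq_preimage_symm, mem_preimage, mem_Iic]
  exact ⟨fun h => hmax u ⟨h, e, hu⟩, hA u m ⟨e, hu⟩ hmA hm⟩

theorem one_le_orderingWidth [Finite E] (hloop : G.Loopless) (e : E)
    (φ : Fin (Fintype.card V) ≃ V) : 1 ≤ G.orderingWidth φ := by
  obtain ⟨u, v, he, hlt⟩ : ∃ u v, G.ends e = s(u, v) ∧ φ.symm u < φ.symm v := by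
    have hdiag := hloop e
    induction h : G.ends e with | _ u v
    rw [h, Sym2.mk_isDiag_iff] at hdiag
    rcases (φ.symm.injective.ne hdiag).lt_or_gt with hlt | hlt
    exacts [⟨u, v, rfl, hlt⟩, ⟨v, u, Sym2.eq_swap, hlt⟩]
  refine Nat.one_le_iff_ne_zero.2 fun h => ?_
  have hempty := (ncard_eq_zero (toFinite _)).1
    (Nat.le_zero.1 (h ▸ G.ncard_edgeBoundary_Iic_le φ (φ.symm u)))
  refine eq_empty_iff_forall_notMem.1 hempty e ⟨u, v, he, ?_, ?_⟩ <;>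
    simp [Equiv.image_eq_preimage_symm, hlt]

theorem exists_orderingWidth_eq_width :
    ∃ φ : Fin (Fintype.card V) ≃ V, G.orderingWidth φ = G.width :=
  Nat.sInf_mem (s := range fun φ : Fin (Fintype.card V) ≃ V => G.orderingWidth φ)
    ⟨_, (Fintype.equivFin V).symm, rfl⟩

theorem width_le_orderingWidth (φ : Fin (Fintype.card V) ≃ V) : G.width ≤ G.orderingWidth φ :=
  Nat.sInf_le ⟨φ, rfl⟩

open Classical in
/-- The heights assigned to the vertices in order to realize the ordering `φ` by a Morse function:
the non-isolated vertices are ordered by `φ`, and the isolated vertices, which should not share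
a level with any edge, are placed below all of them. -/
noncomputable def orderingHeight (φ : Fin (Fintype.card V) ≃ V) (v : V) : ℝ :=
  if ∃ e, v ∈ G.ends e then (φ.symm v : ℕ) else (φ.symm v : ℕ) - (Fintype.card V : ℝ)

variable {G} {φ : Fin (Fintype.card V) ≃ V} {u v : V}

theorem orderingHeight_nonneg_iff : 0 ≤ G.orderingHeight φ v ↔ ∃ e, v ∈ G.ends e := by
  unfold orderingHeight
  split_ifs with h
  · exact iff_of_true (Nat.cast_nonneg _) h
  · exact iff_of_false (sub_neg.2 (Nat.cast_lt.2 (φ.symm v).isLt)).not_ge h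

theorem orderingHeight_le_orderingHeight_iff (hu : ∃ e, u ∈ G.ends e) (hv : ∃ e, v ∈ G.ends e) :
    G.orderingHeight φ u ≤ G.orderingHeight φ v ↔ φ.symm u ≤ φ.symm v := by
  rw [orderingHeight, orderingHeight, if_pos hu, if_pos hv, Nat.cast_le, Fin.val_fin_le]

variable (G φ) in
theorem orderingHeight_injective : Function.Injective (G.orderingHeight φ) := by
  intro u v h
  have hiff : (∃ e, u ∈ G.ends e) ↔ ∃ e, v ∈ G.ends e := by
    rw [← orderingHeight_nonneg_iff (φ := φ), h, orderingHeight_nonneg_iff]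
  refine φ.symm.injective (Fin.ext (Nat.cast_injective (R := ℝ) ?_))
  by_cases hv : ∃ e, v ∈ G.ends e
  · rwa [orderingHeight, orderingHeight, if_pos hv, if_pos (hiff.2 hv)] at h
  · rwa [orderingHeight, orderingHeight, if_neg hv, if_neg (mt hiff.1 hv), sub_left_inj] at h

end Multigraph

namespace SmoothEmbedding

variable {V E : Type*} {G : Multigraph V E} (Γ : SmoothEmbedding G)

theorem exists_mem_Ioo_apply_arc_eq {f : S2 → ℝ} (hf : Continuous f) {e : E} {u v : V}
    (he : G.ends e = s(u, v)) {t : ℝ} (hu : f (Γ.vert u) < t) (hv : t < f (Γ.vert v)) :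
    ∃ τ ∈ Ioo (0 : ℝ) 1, f (Γ.arc e τ) = t := by
  have hcont : ContinuousOn (fun τ => f (Γ.arc e τ)) (Icc 0 1) :=
    hf.comp_continuousOn
      (Topology.IsInducing.subtypeVal.continuousOn_iff.2 (Γ.arc_smooth e).continuousOn)
  obtain ⟨x, y, hxy, hx, hy⟩ := Γ.arc_ends e
  rw [he, Sym2.eq_iff] at hxy
  rcases hxy with ⟨rfl, rfl⟩ | ⟨rfl, rfl⟩
  · exact intermediate_value_Ioo zero_le_one hcont (by rw [hx, hy]; exact ⟨hu, hv⟩)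
  · exact intermediate_value_Ioo' zero_le_one hcont (by rw [hx, hy]; exact ⟨hu, hv⟩)

theorem encard_edgeBoundary_le_widthWith {f : S2 → ℝ} (hf : Continuous f) {A : Set V} {t : ℝ}
    (hA : ∀ v ∈ A, f (Γ.vert v) < t) (hA' : ∀ v ∉ A, t < f (Γ.vert v)) :
    (G.edgeBoundary A).encard ≤ Γ.widthWith f := by
  have hcross : ∀ e ∈ G.edgeBoundary A, ∃ τ ∈ Ioo (0 : ℝ) 1, f (Γ.arc e τ) = t := by
    rintro e ⟨u, v, he, hu, hv⟩
    exact Γ.exists_mem_Ioo_apply_arc_eq hf he (hA u hu) (hA' v hv)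
  choose! τ hτ hτt using hcross
  refine le_iSup_of_le t (encard_le_encard_of_injOn (f := fun e => Γ.arc e (τ e)) ?_ ?_)
  · exact fun e he =>
      ⟨hτt e he, Or.inr (mem_iUnion.2 ⟨e, τ e, Ioo_subset_Icc_self (hτ e he), rfl⟩)⟩
  · exact fun e he e' he' h =>
      by_contra fun hne => Γ.arc_ne_arc e e' hne _ (hτ e he) _ (hτ e' he') h

theorem width_le_widthWith [Fintype V] [Finite E] {f : S2 → ℝ} (hf : Continuous f)
    (hinj : Function.Injective fun v => f (Γ.vert v)) : (G.width : ℕ∞) ≤ Γ.widthWith f := by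
  let ψ := (Fintype.equivFin V).symm
  let g : Fin (Fintype.card V) → ℝ := fun i => f (Γ.vert (ψ i))
  let φ : Fin (Fintype.card V) ≃ V := (Tuple.sort g).trans ψ
  have hmono : StrictMono fun i => f (Γ.vert (φ i)) :=
    (Tuple.monotone_sort g).strictMono_of_injective (hinj.comp φ.injective)
  refine le_trans (Nat.cast_le.2 (G.width_le_orderingWidth φ)) ?_
  refine (Finset.apply_sup_eq_sup_comp_of_linearOrder _ Nat.mono_cast Nat.cast_zero).trans_le
    (Finset.sup_le fun i _ => ?_)
  have habove : ∀ v ∉ φ '' Iic i, f (Γ.vert (φ i)) < f (Γ.vert v) := by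
    intro v hv
    obtain ⟨j, rfl⟩ := φ.surjective v
    exact hmono (lt_of_not_ge fun h => hv ⟨j, h, rfl⟩)
  have hlevel : ∀ᶠ t in 𝓝[>] f (Γ.vert (φ i)), ∀ v ∉ φ '' Iic i, t < f (Γ.vert v) :=
    eventually_all.2 fun v => eventually_imp_distrib_left.2 fun hv =>
      (eventually_lt_nhds (habove v hv)).filter_mono nhdsWithin_le_nhds
  obtain ⟨t, ht, hit⟩ := (hlevel.and self_mem_nhdsWithin).exists
  rw [Function.comp_apply, (toFinite _).cast_ncard_eq]
  refine Γ.encard_edgeBoundary_le_widthWith hf ?_ ht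
  rintro _ ⟨j, hj, rfl⟩
  exact (hmono.monotone hj).trans_lt hit

variable {Γ} {c : V → ℝ} {σ : E → ℝ} {F : E3 → ℝ}

theorem IsHeight.strictMonoOn (hF : Γ.IsHeight c σ F) (e : E) :
    StrictMonoOn (fun t => σ e * F (Γ.arc e t)) (Icc 0 1) := by
  refine strictMonoOn_of_deriv_pos (convex_Icc 0 1)
    (continuousOn_const.mul
      (hF.smooth.continuous.comp_continuousOn (Γ.arc_smooth e).continuousOn)) fun t ht => ?_
  rw [interior_Icc] at ht
  rw [deriv_const_mul_field]
  exact hF.deriv_pos e t ht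

theorem IsHeight.encard_level_le (hF : Γ.IsHeight c σ F) {t : ℝ} {S : Set E}
    (h : ∀ p : S2, F p = t → p ∈ Γ.carrier → ∃ e ∈ S, ∃ τ ∈ Icc (0 : ℝ) 1, Γ.arc e τ = p) :
    ((fun x : S2 => F x) ⁻¹' {t} ∩ Γ.carrier).encard ≤ S.encard := by
  have hunique : ∀ e, ∃ q, ∀ τ ∈ Icc (0 : ℝ) 1, F (Γ.arc e τ) = t → q = Γ.arc e τ := by
    intro e
    by_cases hex : ∃ τ ∈ Icc (0 : ℝ) 1, F (Γ.arc e τ) = t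
    · obtain ⟨τ₀, hτ₀, hF₀⟩ := hex
      exact ⟨_, fun τ hτ hFτ =>
        congrArg _ ((hF.strictMonoOn e).injOn hτ₀ hτ (by simp only [hF₀, hFτ]))⟩
    · exact ⟨Γ.arc e 0, fun τ hτ hFτ => absurd ⟨τ, hτ, hFτ⟩ hex⟩
  choose q hq using hunique
  refine (encard_le_encard fun p hp => ?_).trans (encard_image_le q S)
  obtain ⟨e, he, τ, hτ, rfl⟩ := h p hp.1 hp.2
  exact ⟨e, he, hq e τ hτ hp.1⟩

theorem IsHeight.exists_ends_eq_and_lt (hF : Γ.IsHeight c σ F) {e : E}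
    (hσ : σ e = 1 ∨ σ e = -1) {τ : ℝ} (hτ : τ ∈ Ioo (0 : ℝ) 1) :
    ∃ u v, G.ends e = s(u, v) ∧ c u < F (Γ.arc e τ) ∧ F (Γ.arc e τ) < c v := by
  obtain ⟨x, y, hxy, hx, hy⟩ := Γ.arc_ends e
  have hlt₀ := hF.strictMonoOn e (left_mem_Icc.2 zero_le_one) (Ioo_subset_Icc_self hτ) hτ.1
  have hlt₁ := hF.strictMonoOn e (Ioo_subset_Icc_self hτ) (right_mem_Icc.2 zero_le_one) hτ.2
  simp only [hx, hy, hF.vert] at hlt₀ hlt₁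
  rcases hσ with h | h <;> rw [h] at hlt₀ hlt₁
  · exact ⟨x, y, hxy, by linarith, by linarith⟩
  · exact ⟨y, x, hxy.trans Sym2.eq_swap, by linarith, by linarith⟩

variable (Γ) in
theorem exists_vert_eq_or_exists_arc_eq {p : S2} (hp : p ∈ Γ.carrier) :
    (∃ v, Γ.vert v = p) ∨ ∃ e, ∃ τ ∈ Ioo (0 : ℝ) 1, Γ.arc e τ = p := by
  rcases hp with hp | hp
  · exact Or.inl hp
  · obtain ⟨e, τ, hτ, rfl⟩ := mem_iUnion.1 hp
    rcases Γ.exists_vert_eq_or_mem_Ioo e hτ with ⟨v, hv⟩ | hτ'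
    exacts [Or.inl ⟨v, hv.symm⟩, Or.inr ⟨e, τ, hτ', rfl⟩]

variable (Γ) in
theorem exists_arc_eq_vert {e : E} {v : V} (hv : v ∈ G.ends e) :
    ∃ τ ∈ Icc (0 : ℝ) 1, Γ.arc e τ = Γ.vert v := by
  obtain ⟨b | b, hb⟩ := (Γ.exists_pathEnd_eq_iff e v).2 hv
  exacts [⟨0, by simp, hb⟩, ⟨1, by simp, hb⟩]

theorem IsHeight.encard_level_le_encard_edgeBoundary (hF : Γ.IsHeight c σ F)
    (hσ : ∀ e, σ e = 1 ∨ σ e = -1) {t : ℝ} {A : Set V} (hlt : ∀ v, c v < t → v ∈ A)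
    (hle : ∀ v ∈ A, c v ≤ t) (hvert : ∀ v, c v = t → ∃ e ∈ G.edgeBoundary A, v ∈ G.ends e) :
    ((fun x : S2 => F x) ⁻¹' {t} ∩ Γ.carrier).encard ≤ (G.edgeBoundary A).encard := by
  refine hF.encard_level_le fun p hpt hp => ?_
  rcases Γ.exists_vert_eq_or_exists_arc_eq hp with ⟨v, rfl⟩ | ⟨e, τ, hτ, rfl⟩
  · obtain ⟨e, he, hv⟩ := hvert v ((hF.vert v).symm.trans hpt)
    exact ⟨e, he, Γ.exists_arc_eq_vert hv⟩
  · obtain ⟨u, v, huv, hu, hv⟩ := hF.exists_ends_eq_and_lt (hσ e) hτ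
    rw [hpt] at hu hv
    exact ⟨e, ⟨u, v, huv, hlt u hu, fun hvA => (hle v hvA).not_gt hv⟩, τ,
      Ioo_subset_Icc_self hτ, rfl⟩

-- A vertex at the level `t` is counted by an edge at it, which lies in the boundary of `{c < t}`
-- or of `{c ≤ t}` according to whether its other end is lower or higher.
theorem IsHeight.exists_encard_level_le (hF : Γ.IsHeight c σ F) (hσ : ∀ e, σ e = 1 ∨ σ e = -1)
    (hloop : G.Loopless) (hc : Function.Injective c) {t : ℝ}
    (ht : ∀ v, c v = t → ∃ e, v ∈ G.ends e) :
    ∃ A : Set V, (∀ u v, c u ≤ c v → v ∈ A → u ∈ A) ∧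
      ((fun x : S2 => F x) ⁻¹' {t} ∩ Γ.carrier).encard ≤ (G.edgeBoundary A).encard := by
  by_cases hdown : ∃ e v w, G.ends e = s(w, v) ∧ c v = t ∧ c w < t
  · obtain ⟨e, v, w, he, hv, hw⟩ := hdown
    refine ⟨{v | c v < t}, fun u v huv hv => huv.trans_lt hv,
      hF.encard_level_le_encard_edgeBoundary hσ (fun v hv => hv) (fun v hv => le_of_lt hv) ?_⟩
    intro v' hv'
    obtain rfl : v' = v := hc (hv'.trans hv.symm)
    exact ⟨e, ⟨w, v', he, hw, hv.not_lt⟩, he ▸ Sym2.mem_mk_right w v'⟩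
  · refine ⟨{v | c v ≤ t}, fun u v huv hv => huv.trans hv,
      hF.encard_level_le_encard_edgeBoundary hσ (fun v hv => le_of_lt hv) (fun v hv => hv) ?_⟩
    intro v hv
    obtain ⟨e, hve⟩ := ht v hv
    obtain ⟨w, he⟩ := Sym2.mem_iff_exists.1 hve
    have hvw : v ≠ w := fun h => hloop e (by rw [he, h, Sym2.mk_isDiag_iff])
    have htw : c w ≠ t := fun h => hvw (hc (hv.trans h.symm))
    have hup : t < c w := htw.lt_or_gt.resolve_left fun hw =>
      hdown ⟨e, v, w, he.trans Sym2.eq_swap, hv, hw⟩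
    exact ⟨e, ⟨v, w, he, hv.le, hup.not_ge⟩, hve⟩

theorem IsHeight.encard_level_le_one (hF : Γ.IsHeight c σ F) (hσ : ∀ e, σ e = 1 ∨ σ e = -1)
    (hc : Function.Injective c) {v : V} (hv : ∀ e, ∀ u ∈ G.ends e, c v < c u) :
    ((fun x : S2 => F x) ⁻¹' {c v} ∩ Γ.carrier).encard ≤ 1 := by
  refine (encard_le_encard (t := {Γ.vert v}) ?_).trans (encard_singleton _).le
  rintro p ⟨hpt : F p = c v, hp⟩
  rcases Γ.exists_vert_eq_or_exists_arc_eq hp with ⟨u, rfl⟩ | ⟨e, τ, hτ, rfl⟩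
  · rw [hF.vert] at hpt
    rw [hc hpt, mem_singleton_iff]
  · obtain ⟨a, b, hab, ha, -⟩ := hF.exists_ends_eq_and_lt (hσ e) hτ
    exact absurd (hpt ▸ ha) (hv e a (hab ▸ Sym2.mem_mk_left a b)).not_gt

variable (Γ) in
theorem morseWidth_le_width [Fintype V] [Finite E] (hdeg : ∀ v, G.degree v ≤ 4)
    (hloop : G.Loopless) (hedge : Nonempty V → Nonempty E) : Γ.morseWidth ≤ (G.width : ℕ∞) := by
  obtain ⟨φ, hφ⟩ := G.exists_orderingWidth_eq_width
  have hc := G.orderingHeight_injective φ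
  obtain ⟨σ, F, hσ, hF, hgen⟩ := Γ.exists_isHeight_isGeneric hdeg hloop hc
  refine (iInf₂_le (fun x : S2 => F x) hgen).trans (iSup_le fun t => ?_)
  rw [← hφ]
  by_cases ht : ∀ v, G.orderingHeight φ v = t → ∃ e, v ∈ G.ends e
  · obtain ⟨A, hA, hle⟩ := hF.exists_encard_level_le hσ hloop hc ht
    refine hle.trans ?_
    rw [← (toFinite _).cast_ncard_eq, Nat.cast_le]
    exact G.ncard_edgeBoundary_le_orderingWidth φ fun u v hu hvA hv huv =>
      hA u v ((Multigraph.orderingHeight_le_orderingHeight_iff hu hv).2 huv) hvA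
  · push Not at ht
    obtain ⟨v, rfl, hv⟩ := ht
    obtain ⟨e⟩ := hedge ⟨v⟩
    have hbelow : ∀ e, ∀ u ∈ G.ends e, G.orderingHeight φ v < G.orderingHeight φ u := by
      intro e u hu
      have hneg : ¬ 0 ≤ G.orderingHeight φ v := fun h =>
        (Multigraph.orderingHeight_nonneg_iff.1 h).elim hv
      exact (not_le.1 hneg).trans_le (Multigraph.orderingHeight_nonneg_iff.2 ⟨e, hu⟩)
    exact (hF.encard_level_le_one hσ hc hbelow).trans
      (Nat.one_le_cast.2 (G.one_le_orderingWidth hloop e φ))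

end SmoothEmbedding

theorem morseWidth_eq_width {V E : Type*} [Fintype V] [Fintype E] (G : Multigraph V E)
    (Γ : SmoothEmbedding G) (hdeg : ∀ v, G.degree v ≤ 4) (hloop : G.Loopless)
    (hedge : Nonempty V → Nonempty E) :
    Γ.morseWidth = (G.width : ℕ∞) := by
  refine le_antisymm (Γ.morseWidth_le_width hdeg hloop hedge) (le_iInf₂ fun f hf => ?_)
  exact Γ.width_le_widthWith hf.morse.smooth.continuous hf.vert_injective
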